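/- arXiv:1309.7593 — 3 statements merged into one kernel-verified Lean document; each statement's English description precedes it below -/
import Mathlib

section
/- Let f: [0,1] → [0,1] be a multimodal map of class C^3 with non-flat critical points, with all periodic points hyperbolic repelling, and topologically exact, and let μ_f be its maximal entropy measure (non-atomic, with full support, and with constant Jacobian exp(h_top(f))). If μ_f is doubling, then for each M' > 1 there is ε > 0 such that for each pair of adjacent subintervals L and R of [0,1] with |L| ≥ ε|R|, one has μ_f(L) ≥ M' μ_f(R). -/
/-! This is a reverse doubling property of doubling measures on an interval. Let `p` be the common
endpoint of `L` and `R`, and `q` the other endpoint of `L`. The balls centered at `p + 3t(q - p)`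
with radius `t|q - p|`, for `t = δ, 2δ, 4δ, …, 2ⁿ⁻¹δ`, are pairwise disjoint and contained in `L`,
while four times any of them covers the ball of radius `δ|q - p|` about `p`, hence covers `R` when
`R` is short. Doubling twice, each of the `n` balls has measure at least `C⁻² μ(R)`, so
`μ(L) ≥ n C⁻² μ(R)`. -/

open Set MeasureTheory Metric Filter

noncomputable section

/-- The unit interval as a subset of `ℝ`. -/
def unitI : Set ℝ := Set.Icc 0 1

/-- The ball of `I` centered at `x` of radius `r`. -/
def ballI (x r : ℝ) : Set ℝ := {y ∈ unitI | |x - y| < r}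

/-- `f` is a multimodal map of the unit interval: continuous, non-injective,
and there is a finite partition of `I` into intervals on each of which `f` is injective. -/
def Multimodal (f : ℝ → ℝ) : Prop :=
  ContinuousOn f unitI ∧ Set.MapsTo f unitI unitI ∧ ¬ Set.InjOn f unitI ∧
    ∃ (n : ℕ) (J : Fin n → Set ℝ), (∀ i, (J i).OrdConnected) ∧ (⋃ i, J i) = unitI ∧
      Pairwise (Function.onFun Disjoint J) ∧ ∀ i, Set.InjOn f (J i)

/-- `f` is topologically exact on the unit interval. -/
def TopExact (f : ℝ → ℝ) : Prop :=
  ∀ U : Set ℝ, U.Nonempty → U ⊆ unitI → (∃ V : Set ℝ, IsOpen V ∧ U = V ∩ unitI) →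
    ∃ n : ℕ, 1 ≤ n ∧ f^[n] '' U = unitI

/-- The set of critical points of `f` in the unit interval. -/
def Crit (f : ℝ → ℝ) : Set ℝ := {x ∈ unitI | deriv f x = 0}

/-- The set of turning points of `f`: points of `I` at which `f` is not locally injective. -/
def TurnPts (f : ℝ → ℝ) : Set ℝ :=
  {x ∈ unitI | ∀ ε > 0, ¬ Set.InjOn f (ballI x ε)}

/-- A `C^3` diffeomorphism of `ℝ`. -/
def IsC3Diffeo (φ : ℝ → ℝ) : Prop :=
  ContDiff ℝ 3 φ ∧ Function.Bijective φ ∧ ∀ x : ℝ, deriv φ x ≠ 0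

/-- `f` is non-flat at `c` with exponent `ℓc`. -/
def NonflatAt (f : ℝ → ℝ) (ℓc : ℝ) (c : ℝ) : Prop :=
  1 < ℓc ∧ ∃ φ ψ : ℝ → ℝ, IsC3Diffeo φ ∧ IsC3Diffeo ψ ∧ φ c = 0 ∧ ψ (f c) = 0 ∧
    ∃ U ∈ nhdsWithin c unitI, ∀ x ∈ U, |ψ (f x)| = |φ x| ^ ℓc

/-- `f` is of class `C^3` with non-flat critical points, with exponents given by `ℓ`. -/
def C3NonflatWith (f : ℝ → ℝ) (ℓ : ℝ → ℝ) : Prop :=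
  ContDiffOn ℝ 1 f unitI ∧ ContDiffOn ℝ 3 f (unitI \ Crit f) ∧
    ∀ c ∈ Crit f, NonflatAt f (ℓ c) c

/-- `f` is of class `C^3` with non-flat critical points. -/
def C3Nonflat (f : ℝ → ℝ) : Prop := ∃ ℓ : ℝ → ℝ, C3NonflatWith f ℓ

/-- All periodic points of `f` are hyperbolic repelling. -/
def AllPeriodicRepelling (f : ℝ → ℝ) : Prop :=
  ∀ p ∈ unitI, ∀ n : ℕ, 1 ≤ n → f^[n] p = p → 1 < |deriv (f^[n]) p|

/-- The criticality of `f^m` at `x` with respect to `r`: the number of `j < m` such that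
the connected component of `f^{-(m-j)}(B(f^m(x),r) ∩ I)` containing `f^j(x)` meets the
set of turning points. -/
def criticality (f : ℝ → ℝ) (m : ℕ) (x r : ℝ) : ℕ :=
  Nat.card {j : ℕ // j < m ∧
    (connectedComponentIn (unitI ∩ f^[m - j] ⁻¹' ballI (f^[m] x) r) (f^[j] x) ∩ TurnPts f).Nonempty}

/-- `f` is semi-hyperbolic. -/
def SemiHyperbolic (f : ℝ → ℝ) : Prop :=
  ∃ r : ℝ, 0 < r ∧ ∃ D : ℕ, 1 ≤ D ∧ ∀ x ∈ unitI, ∀ n : ℕ, 1 ≤ n → criticality f n x r ≤ D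

/-- `c` is a recurrent point of `f`: `c` belongs to the set of accumulation points of
its forward orbit. -/
def RecurrentPt (f : ℝ → ℝ) (c : ℝ) : Prop :=
  ∀ ε > 0, ∀ N : ℕ, ∃ n : ℕ, N ≤ n ∧ |f^[n] c - c| < ε

/-- A Borel measure on the unit interval is doubling. -/
def DoublingOn (μ : Measure ℝ) : Prop :=
  ∃ C : ℝ, 0 < C ∧ ∃ r₀ : ℝ, 0 < r₀ ∧ ∀ x ∈ unitI, ∀ r : ℝ, 0 < r → r < r₀ →
    μ (ballI x (2 * r)) ≤ ENNReal.ofReal C * μ (ballI x r)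

/-- A homeomorphism of the unit interval is quasi-symmetric. -/
def QuasiSymmetricOn (h : ℝ → ℝ) : Prop :=
  ∃ K : ℝ, 1 ≤ K ∧ ∀ x ∈ unitI, ∀ ε : ℝ, 0 < ε → x + ε ∈ unitI → x - ε ∈ unitI →
    |h (x + ε) - h x| ≤ K * |h x - h (x - ε)| ∧
    |h x - h (x - ε)| ≤ K * |h (x + ε) - h x|

/-- `F` is piecewise affine on the unit interval with slope `±s` everywhere. -/
def PiecewiseAffineSlope (F : ℝ → ℝ) (s : ℝ) : Prop :=
  ∃ (n : ℕ) (a : Fin (n + 1) → ℝ), a 0 = 0 ∧ a (Fin.last n) = 1 ∧ StrictMono a ∧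
    ∀ i : Fin n, ∃ b σ : ℝ, (σ = 1 ∨ σ = -1) ∧
      ∀ x ∈ Set.Icc (a i.castSucc) (a i.succ), F x = σ * s * x + b

/-- `f` is quasi-symmetrically conjugate to a piecewise affine map of the unit interval
with slope `±s` everywhere. -/
def QSConjPiecewiseAffine (f : ℝ → ℝ) (s : ℝ) : Prop :=
  ∃ h F : ℝ → ℝ, ContinuousOn h unitI ∧ Set.BijOn h unitI unitI ∧ QuasiSymmetricOn h ∧
    Set.MapsTo F unitI unitI ∧ PiecewiseAffineSlope F s ∧ ∀ x ∈ unitI, h (f x) = F (h x)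

/-- The topological entropy of `f` on the unit interval (Bowen's definition). -/
def htop (f : ℝ → ℝ) : ℝ := (Dynamics.coverEntropy f unitI).toReal

/-- `μ` is an `f`-invariant Borel probability measure on the unit interval which is
non-atomic, has topological support equal to the unit interval, and has constant
Jacobian `s`; for a topologically exact multimodal map this characterizes the unique
measure of maximal entropy when `s = exp (htop f)`. -/
def IsMaxEntropyLike (f : ℝ → ℝ) (μ : Measure ℝ) (s : ℝ) : Prop :=
  IsProbabilityMeasure μ ∧ μ unitIᶜ = 0 ∧
    (∀ A : Set ℝ, MeasurableSet A → μ (f ⁻¹' A) = μ A) ∧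
    (∀ x : ℝ, μ {x} = 0) ∧
    (∀ x ∈ unitI, ∀ r : ℝ, 0 < r → 0 < μ (ballI x r)) ∧
    (∀ A : Set ℝ, MeasurableSet A → A ⊆ unitI → Set.InjOn f A →
      μ (f '' A) = ENNReal.ofReal s * μ A)

/-- `W` is a pull-back of `J` by `f^n`, i.e. a connected component of `f^{-n}(J)`. -/
def IsPullback (f : ℝ → ℝ) (n : ℕ) (J W : Set ℝ) : Prop :=
  ∃ x ∈ unitI ∩ f^[n] ⁻¹' J, W = connectedComponentIn (unitI ∩ f^[n] ⁻¹' J) x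

/-- `J` is `τ`-well inside `T` (for intervals): both components of `T ∖ J`
have length at least `τ|J|`. -/
def WellInside (τ : ℝ) (J T : Set ℝ) : Prop :=
  J ⊆ T ∧ τ * Metric.diam J ≤ sInf J - sInf T ∧ τ * Metric.diam J ≤ sSup T - sSup J

open scoped ENNReal

lemma card_mul_le_mul_measure_of_pairwiseDisjoint {α ι : Type*} [MeasurableSpace α]
    {ν : Measure α} {S : Finset ι} {B : ι → Set α} {L : Set α} {a c : ℝ≥0∞}
    (hdisj : (S : Set ι).PairwiseDisjoint B) (hmeas : ∀ i ∈ S, MeasurableSet (B i))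
    (hsub : ∀ i ∈ S, B i ⊆ L) (hle : ∀ i ∈ S, a ≤ c * ν (B i)) :
    S.card * a ≤ c * ν L :=
  calc S.card * a ≤ ∑ i ∈ S, c * ν (B i) := by
        simpa only [nsmul_eq_mul] using S.card_nsmul_le_sum _ a hle
    _ = c * ν (⋃ i ∈ S, B i) := by rw [measure_biUnion_finset hdisj hmeas, Finset.mul_sum]
    _ ≤ c * ν L := by gcongr; exact iUnion₂_subset hsub

lemma dist_le_diam_of_mem_closure {X : Type*} [PseudoMetricSpace X] {A : Set X} {x p : X}
    (hA : Bornology.IsBounded A) (hx : x ∈ A) (hp : p ∈ closure A) : dist x p ≤ diam A :=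
  diam_closure A ▸ dist_le_diam_of_mem hA.closure (subset_closure hx) hp

lemma diam_pos_or_diam_pos_of_disjoint {X : Type*} [MetricSpace X] {A B : Set X} {p : X}
    (hA : Bornology.IsBounded A) (hB : Bornology.IsBounded B) (hAB : Disjoint A B)
    (hpA : p ∈ closure A) (hpB : p ∈ closure B) : 0 < diam A ∨ 0 < diam B := by
  rcases A.subsingleton_or_nontrivial with A_subsingleton | A_nontrivial
  · rcases B.subsingleton_or_nontrivial with B_subsingleton | B_nontrivial
    · rw [A_subsingleton.isClosed.closure_eq] at hpA
      rw [B_subsingleton.isClosed.closure_eq] at hpB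
      exact absurd hpB (hAB.notMem_of_mem_left hpA)
    · exact .inr (diam_pos B_nontrivial hB)
  · exact .inl (diam_pos A_nontrivial hA)

lemma exists_endpoints_of_adjacent {L R : Set ℝ} (hL : L.OrdConnected)
    (hLb : Bornology.IsBounded L) (hRb : Bornology.IsBounded R)
    (hLn : L.Nonempty) (hRn : R.Nonempty) (hadj : sSup L = sInf R ∨ sSup R = sInf L) :
    ∃ p ∈ closure L ∩ closure R, ∃ q ∈ closure L, dist p q = diam L ∧ uIoo p q ⊆ L := by
  have sInf_mem := csInf_mem_closure hLn hLb.bddBelow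
  have sSup_mem := csSup_mem_closure hLn hLb.bddAbove
  have sInf_le_sSup := csInf_le_csSup hLn hLb.bddBelow hLb.bddAbove
  have dist_eq_diam : dist (sSup L) (sInf L) = diam L := by
    rw [Real.diam_eq hLb, Real.dist_eq, abs_of_nonneg (sub_nonneg.2 sInf_le_sSup)]
  have uIoo_subset : uIoo (sInf L) (sSup L) ⊆ L := by
    rw [uIoo_of_le sInf_le_sSup]
    exact IsConnected.Ioo_csInf_csSup_subset ⟨hLn, hL.isPreconnected⟩ hLb.bddBelow hLb.bddAbove
  rcases hadj with hLR | hRL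
  · exact ⟨sSup L, ⟨sSup_mem, hLR ▸ csInf_mem_closure hRn hRb.bddBelow⟩, sInf L, sInf_mem,
      dist_eq_diam, uIoo_comm (sInf L) (sSup L) ▸ uIoo_subset⟩
  · exact ⟨sInf L, ⟨sInf_mem, hRL ▸ csSup_mem_closure hRn hRb.bddAbove⟩, sSup L, sSup_mem,
      dist_comm (sSup L) (sInf L) ▸ dist_eq_diam, uIoo_subset⟩

lemma mem_ballI {x y r : ℝ} : y ∈ ballI x r ↔ y ∈ unitI ∧ dist y x < r := by
  rw [dist_comm, Real.dist_eq]
  rfl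

lemma measurableSet_ballI (x r : ℝ) : MeasurableSet (ballI x r) := by
  have inter_ball : ballI x r = unitI ∩ ball x r := Set.ext fun _ ↦ mem_ballI
  exact inter_ball ▸ measurableSet_Icc.inter measurableSet_ball

lemma ballI_subset_ballI {x y r s : ℝ} (h : r + dist x y ≤ s) : ballI x r ⊆ ballI y s := by
  intro z hz
  rw [mem_ballI] at hz ⊢
  exact ⟨hz.1, by linarith [dist_triangle z x y]⟩

section WhitneyBall

/-- The ball of `I` centered at `p + 3t(q - p)` with radius `t|q - p|`: a Whitney ball of the
interval between `p` and `q`, its distance to `p` being twice its radius. -/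
def whitneyBall (p q t : ℝ) : Set ℝ := ballI (AffineMap.lineMap p q (3 * t)) (t * dist p q)

variable {p q s t : ℝ}

lemma dist_mem_Ioo_of_mem_whitneyBall {y : ℝ} (hy : y ∈ whitneyBall p q t) :
    dist y p ∈ Ioo (2 * (t * dist p q)) (4 * (t * dist p q)) := by
  have dist_center := (mem_ballI.1 hy).2
  have t_pos : 0 < t := pos_of_mul_pos_left (dist_nonneg.trans_lt dist_center) dist_nonneg
  have dist_center_endpoint : dist (AffineMap.lineMap p q (3 * t)) p = 3 * (t * dist p q) := by
    rw [dist_lineMap_left, Real.norm_of_nonneg (by positivity), mul_assoc]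
  constructor
  · linarith [dist_triangle_left (AffineMap.lineMap p q (3 * t)) p y]
  · linarith [dist_triangle y (AffineMap.lineMap p q (3 * t)) p]

lemma whitneyBall_subset_uIoo (ht : t ≤ 1 / 4) : whitneyBall p q t ⊆ uIoo p q := by
  intro y hy
  have dist_center := (mem_ballI.1 hy).2
  rw [AffineMap.lineMap_apply_ring', Real.dist_eq, Real.dist_eq, abs_lt] at dist_center
  rcases le_total p q with hpq | hqp
  · rw [abs_of_nonpos (sub_nonpos.2 hpq)] at dist_center
    rw [uIoo_of_le hpq]
    constructor <;> nlinarith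
  · rw [abs_of_nonneg (sub_nonneg.2 hqp)] at dist_center
    rw [uIoo_of_ge hqp]
    constructor <;> nlinarith

lemma disjoint_whitneyBall (hst : 2 * s ≤ t) :
    Disjoint (whitneyBall p q s) (whitneyBall p q t) := by
  refine Set.disjoint_left.2 fun y hs ht ↦ ?_
  have dist_lt := (dist_mem_Ioo_of_mem_whitneyBall hs).2
  have lt_dist := (dist_mem_Ioo_of_mem_whitneyBall ht).1
  have := mul_le_mul_of_nonneg_right hst (dist_nonneg (x := p) (y := q))
  linarith

lemma pairwise_disjoint_whitneyBall_two_pow_mul (p q : ℝ) {δ : ℝ} (hδ : 0 ≤ δ) :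
    Pairwise (Function.onFun Disjoint fun k : ℕ ↦ whitneyBall p q (2 ^ k * δ)) := by
  refine (pairwise_disjoint_on _).2 fun j k hjk ↦ disjoint_whitneyBall ?_
  calc 2 * (2 ^ j * δ) = 2 ^ (j + 1) * δ := by ring
    _ ≤ 2 ^ k * δ := by gcongr; exacts [one_le_two, hjk]

end WhitneyBall

section Doubling

variable {μ : Measure ℝ} {K : ℝ≥0∞} {r₀ : ℝ}

/-- `μ` satisfies the doubling inequality on `I` with constant `K` at all radii below `r₀`:
the property `DoublingOn` with its two constants made explicit. -/
def IsDoublingBelow (μ : Measure ℝ) (K : ℝ≥0∞) (r₀ : ℝ) : Prop :=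
  ∀ x ∈ unitI, ∀ r : ℝ, 0 < r → r < r₀ → μ (ballI x (2 * r)) ≤ K * μ (ballI x r)

lemma IsDoublingBelow.measure_ballI_four_mul_le (h : IsDoublingBelow μ K r₀) {x r : ℝ}
    (hx : x ∈ unitI) (hr : 0 < r) (hr₀ : 2 * r < r₀) :
    μ (ballI x (4 * r)) ≤ K ^ 2 * μ (ballI x r) :=
  calc μ (ballI x (4 * r)) = μ (ballI x (2 * (2 * r))) := by ring_nf
    _ ≤ K * μ (ballI x (2 * r)) := h x hx _ (by positivity) hr₀
    _ ≤ K * (K * μ (ballI x r)) := by gcongr; exact h x hx r hr (by linarith)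
    _ = K ^ 2 * μ (ballI x r) := by ring

lemma IsDoublingBelow.measure_ballI_le_whitneyBall (h : IsDoublingBelow μ K r₀) {p q s t : ℝ}
    (hp : p ∈ unitI) (hq : q ∈ unitI) (hpq : p ≠ q) (ht : 0 < t) (ht' : 3 * t ≤ 1) (hst : s ≤ t)
    (hr₀ : 2 * (t * dist p q) < r₀) :
    μ (ballI p (s * dist p q)) ≤ K ^ 2 * μ (whitneyBall p q t) := by
  have center_mem := (convex_Icc (0 : ℝ) 1).lineMap_mem hp hq (t := 3 * t) ⟨by positivity, ht'⟩
  have radius_pos : 0 < t * dist p q := mul_pos ht (dist_pos.2 hpq)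
  have four_mul_covers :
      ballI p (s * dist p q) ⊆ ballI (AffineMap.lineMap p q (3 * t)) (4 * (t * dist p q)) := by
    refine ballI_subset_ballI ?_
    rw [dist_left_lineMap, Real.norm_of_nonneg (by positivity)]
    have := mul_le_mul_of_nonneg_right hst (dist_nonneg (x := p) (y := q))
    linarith
  exact (measure_mono four_mul_covers).trans (h.measure_ballI_four_mul_le center_mem radius_pos hr₀)

lemma IsDoublingBelow.nat_mul_measure_ballI_le (h : IsDoublingBelow μ K r₀) {p q δ : ℝ}
    (hp : p ∈ unitI) (hq : q ∈ unitI) (hpq : p ≠ q) (hδ : 0 < δ) {n : ℕ}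
    (hn : 2 ^ n * δ ≤ 1 / 2) (hnr₀ : 2 ^ n * δ < r₀) :
    n * μ (ballI p (δ * dist p q)) ≤ K ^ 2 * μ (uIoo p q) := by
  have two_mul_le : ∀ k ∈ Finset.range n, 2 * (2 ^ k * δ) ≤ 2 ^ n * δ := fun k hk ↦
    calc 2 * (2 ^ k * δ) = 2 ^ (k + 1) * δ := by ring
      _ ≤ 2 ^ n * δ := by gcongr; exacts [one_le_two, Finset.mem_range.1 hk]
  have dist_le_one : dist p q ≤ 1 := by simpa using Real.dist_le_of_mem_Icc hp hq
  have packing := card_mul_le_mul_measure_of_pairwiseDisjoint (ν := μ) (S := Finset.range n)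
    (B := fun k ↦ whitneyBall p q (2 ^ k * δ)) (L := uIoo p q)
    (a := μ (ballI p (δ * dist p q))) (c := K ^ 2)
    ((pairwise_disjoint_whitneyBall_two_pow_mul p q hδ.le).set_pairwise _)
    (fun _ _ ↦ measurableSet_ballI _ _)
    (fun k hk ↦ whitneyBall_subset_uIoo (by linarith [two_mul_le k hk]))
    (fun k hk ↦ h.measure_ballI_le_whitneyBall hp hq hpq (by positivity)
      (by linarith [two_mul_le k hk, show 0 < 2 ^ k * δ by positivity])
      (le_mul_of_one_le_left hδ.le (one_le_pow₀ one_le_two))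
      (by nlinarith [two_mul_le k hk, show 0 < 2 ^ k * δ by positivity]))
  rwa [Finset.card_range] at packing

lemma DoublingOn.exists_mul_measure_ballI_le_measure_uIoo (h : DoublingOn μ) {M : ℝ≥0∞}
    (hM : M ≠ ∞) :
    ∃ δ : ℝ, 0 < δ ∧ ∀ p ∈ unitI, ∀ q ∈ unitI, p ≠ q →
      M * μ (ballI p (δ * dist p q)) ≤ μ (uIoo p q) := by
  obtain ⟨C, hC, r₀, hr₀, hdoub⟩ := h
  have doubling : IsDoublingBelow μ (ENNReal.ofReal C) r₀ := hdoub
  have const_ne_zero : ENNReal.ofReal C ^ 2 ≠ 0 := pow_ne_zero 2 (ENNReal.ofReal_pos.2 hC).ne'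
  have const_ne_top : ENNReal.ofReal C ^ 2 ≠ ∞ := ENNReal.pow_ne_top ENNReal.ofReal_ne_top
  obtain ⟨n, hn⟩ := ENNReal.exists_nat_gt (ENNReal.mul_ne_top const_ne_top hM)
  have two_pow_mul : (2 : ℝ) ^ n * (min 1 r₀ / 2 / 2 ^ n) = min 1 r₀ / 2 := by field_simp
  refine ⟨min 1 r₀ / 2 / 2 ^ n, by positivity, fun p hp q hq hpq ↦ ?_⟩
  have count := doubling.nat_mul_measure_ballI_le hp hq hpq (δ := min 1 r₀ / 2 / 2 ^ n)
    (by positivity) (n := n) (by linarith [min_le_left 1 r₀]) (by linarith [min_le_right 1 r₀])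
  rw [← ENNReal.mul_le_mul_iff_right const_ne_zero const_ne_top, ← mul_assoc]
  exact (mul_le_mul_left hn.le _).trans count

end Doubling

theorem adjacent_measure_comparison_general {μ : Measure ℝ} (hdoub : DoublingOn μ) {M : ℝ≥0∞}
    (hM : M ≠ ∞) :
    ∃ ε : ℝ, 0 < ε ∧ ∀ L R : Set ℝ, L ⊆ unitI → R ⊆ unitI → L.OrdConnected →
      L.Nonempty → R.Nonempty → Disjoint L R → (sSup L = sInf R ∨ sSup R = sInf L) →
      ε * Metric.diam R ≤ Metric.diam L → M * μ R ≤ μ L := by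
  obtain ⟨δ, hδ, measure_le⟩ := hdoub.exists_mul_measure_ballI_le_measure_uIoo hM
  refine ⟨2 / δ, by positivity, fun L R hL hR hLo hLn hRn hdisj hadj hdiam ↦ ?_⟩
  have hLb : Bornology.IsBounded L := (isBounded_Icc 0 1).subset hL
  have hRb : Bornology.IsBounded R := (isBounded_Icc 0 1).subset hR
  have closure_subset : closure L ⊆ unitI := closure_minimal hL isClosed_Icc
  obtain ⟨p, ⟨hpL, hpR⟩, q, hqL, hpq, uIoo_subset⟩ :=
    exists_endpoints_of_adjacent hLo hLb hRb hLn hRn hadj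
  have diam_L_pos : 0 < diam L :=
    (diam_pos_or_diam_pos_of_disjoint hLb hRb hdisj hpL hpR).elim id fun diam_R_pos ↦
      (mul_pos (by positivity) diam_R_pos).trans_le hdiam
  have diam_lt : diam R < δ * dist p q := by
    rw [div_mul_eq_mul_div, div_le_iff₀ hδ] at hdiam
    rw [hpq]
    linarith [mul_pos hδ diam_L_pos]
  have R_subset : R ⊆ ballI p (δ * dist p q) := fun y hy ↦
    mem_ballI.2 ⟨hR hy, (dist_le_diam_of_mem_closure hRb hy hpR).trans_lt diam_lt⟩
  calc M * μ R ≤ M * μ (ballI p (δ * dist p q)) := by gcongr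
    _ ≤ μ (uIoo p q) := measure_le p (closure_subset hpL) q (closure_subset hqL)
        (dist_pos.1 (hpq ▸ diam_L_pos))
    _ ≤ μ L := measure_mono uIoo_subset

/-- **Lemma 4.3**: if the maximal entropy measure is doubling, then much longer adjacent
intervals have much bigger measure. -/
theorem adjacent_measure_comparison (f : ℝ → ℝ) (μ : Measure ℝ)
    (hmm : Multimodal f) (hc3 : C3Nonflat f) (hrep : AllPeriodicRepelling f)
    (hex : TopExact f) (hμ : IsMaxEntropyLike f μ (Real.exp (htop f)))
    (hdoub : DoublingOn μ) :
    ∀ M' : ℝ, 1 < M' → ∃ ε : ℝ, 0 < ε ∧ ∀ L R : Set ℝ,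
      L ⊆ unitI → R ⊆ unitI → L.OrdConnected → R.OrdConnected →
      L.Nonempty → R.Nonempty → Disjoint L R → (sSup L = sInf R ∨ sSup R = sInf L) →
      ε * Metric.diam R ≤ Metric.diam L →
      ENNReal.ofReal M' * μ R ≤ μ L := by
  intro M' _
  obtain ⟨ε, hε, measure_le⟩ := adjacent_measure_comparison_general hdoub ENNReal.ofReal_ne_top
  exact ⟨ε, hε, fun L R hL hR hLo _ ↦ measure_le L R hL hR hLo⟩

end
end

section
/- Let f: [0,1] → [0,1] be a multimodal map of class C^3 with non-flat critical points, with all periodic points hyperbolic repelling, and topologically exact, and let μ_f be its maximal entropy measure (non-atomic, with full support, and with constant Jacobian exp(h_top(f))). Then there exists τ > 0 such that the following holds: for each open subinterval V of [0,1] with |V| < τ, every integer m ≥ 1, and each pull-back W of V by f^m, if D denotes the number of j ∈ {0,…,m−1} such that the connected component of f^{−(m−j)}(V) containing f^j(W) intersects Crit(f), then exp(−m·h_top(f))·μ_f(f^m(W)) ≤ μ_f(W) ≤ 2^D·exp(−m·h_top(f))·μ_f(f^m(W)) ≤ 2^D·exp(−m·h_top(f))·μ_f(V). -/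
/-!
Write `s` for the constant Jacobian and `W` for the pull-back of `V` by `f^m`. It suffices to
compare the measures of the consecutive images `f^j(W)` and `f^(j+1)(W)`, which are intervals.
Cutting an interval `A` along the intervals of injectivity of `f` gives `μ (f(A)) ≤ s μ(A)`, with
equality if `f` is injective on `A`, which by Rolle's theorem is the case if `A` contains no
critical point. If `A` is shorter than every nondegenerate interval of injectivity, then it meets at
most two of them, since a third one would lie between two points of `A`; hence
`s μ(A) ≤ 2 μ (f(A))`. Multiplying these estimates gives one factor `2` for each `j` at which the
pull-back of `V` meets `Crit f`.

That the images `f^j(W)` are short follows from topological exactness. By compactness, some `N` is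
such that every `f^n` with `n ≥ N` maps each interval of length at least `ε` onto `I`. If `f^k` maps
such an interval into `V`, then `f^(max k N - k)` maps `V` onto `I`, which uniform continuity of the
finitely many iterates `f^i`, `i ≤ N`, rules out as soon as `V` is short enough.
-/

open Set MeasureTheory Metric Filter

noncomputable section

open scoped ENNReal Topology

section Geometric

variable {M : Type*} [Preorder M]

lemma le_pow_mul_of_forall_succ_le [Monoid M] [MulLeftMono M] {a : ℕ → M} {s : M}
    (h : ∀ k, a (k + 1) ≤ s * a k) (n : ℕ) : a n ≤ s ^ n * a 0 := by
  induction n with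
  | zero => rw [pow_zero, one_mul]
  | succ n ih =>
    calc a (n + 1) ≤ s * a n := h n
      _ ≤ s * (s ^ n * a 0) := by gcongr
      _ = s ^ (n + 1) * a 0 := by rw [pow_succ', mul_assoc]

lemma pow_mul_le_prod_mul_of_forall_mul_le [CommMonoid M] [MulLeftMono M] {a c : ℕ → M} {s : M}
    {n : ℕ} (h : ∀ k < n, s * a k ≤ c k * a (k + 1)) :
    s ^ n * a 0 ≤ (∏ k ∈ Finset.range n, c k) * a n := by
  induction n with
  | zero => simp
  | succ n ih =>
    calc s ^ (n + 1) * a 0 = s * (s ^ n * a 0) := by rw [pow_succ', mul_assoc]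
      _ ≤ s * ((∏ k ∈ Finset.range n, c k) * a n) := by
        gcongr s * ?_
        exact ih fun k hk => h k (hk.trans n.lt_succ_self)
      _ = (∏ k ∈ Finset.range n, c k) * (s * a n) := mul_left_comm _ _ _
      _ ≤ (∏ k ∈ Finset.range n, c k) * (c n * a (n + 1)) := by
        gcongr _ * ?_
        exact h n n.lt_succ_self
      _ = (∏ k ∈ Finset.range (n + 1), c k) * a (n + 1) := by
        rw [Finset.prod_range_succ, mul_assoc]

end Geometric

/-! ### Measures with constant Jacobian -/

section ConstantJacobian

variable {α ι : Type*} [MeasurableSpace α] {f : α → α} {X A : Set α} {μ : Measure α} {s : ℝ≥0∞}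

/-- The measure `μ` has constant Jacobian `s` for `f` on `X`: it scales by `s` on the measurable
subsets of `X` on which `f` is injective. The image `f '' A` need not be measurable, in which case
`μ (f '' A)` is its outer measure. -/
def HasConstantJacobianOn (f : α → α) (X : Set α) (μ : Measure α) (s : ℝ≥0∞) : Prop :=
  ∀ A, MeasurableSet A → A ⊆ X → InjOn f A → μ (f '' A) = s * μ A

lemma HasConstantJacobianOn.measure_image_inter (hjac : HasConstantJacobianOn f X μ s)
    (hA : MeasurableSet A) (hAX : A ⊆ X) {J : Set α} (hJ : MeasurableSet J) (hfJ : InjOn f J) :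
    μ (f '' (A ∩ J)) = s * μ (A ∩ J) :=
  hjac _ (hA.inter hJ) (inter_subset_left.trans hAX) (hfJ.mono inter_subset_right)

lemma HasConstantJacobianOn.measure_image_le [Countable ι] {J : ι → Set α}
    (hjac : HasConstantJacobianOn f X μ s) (hJ : ∀ i, MeasurableSet (J i))
    (hJdisj : Pairwise (Function.onFun Disjoint J)) (hfJ : ∀ i, InjOn f (J i))
    (hA : MeasurableSet A) (hAX : A ⊆ X) (hAJ : A ⊆ ⋃ i, J i) :
    μ (f '' A) ≤ s * μ A := by
  have hAcut : ⋃ i, A ∩ J i = A := by rw [← inter_iUnion, inter_eq_left.2 hAJ]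
  calc μ (f '' A) = μ (⋃ i, f '' (A ∩ J i)) := by rw [← image_iUnion, hAcut]
    _ ≤ ∑' i, μ (f '' (A ∩ J i)) := measure_iUnion_le _
    _ = ∑' i, s * μ (A ∩ J i) :=
      tsum_congr fun i => hjac.measure_image_inter hA hAX (hJ i) (hfJ i)
    _ = s * μ (⋃ i, A ∩ J i) := by
      rw [ENNReal.tsum_mul_left, measure_iUnion _ fun i => hA.inter (hJ i)]
      exact fun i j hij => (hJdisj hij).mono inter_subset_right inter_subset_right
    _ = s * μ A := by rw [hAcut]

lemma HasConstantJacobianOn.mul_measure_le_card_mul {J : ι → Set α} {G : Finset ι}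
    (hjac : HasConstantJacobianOn f X μ s) (hJ : ∀ i ∈ G, MeasurableSet (J i))
    (hfJ : ∀ i ∈ G, InjOn f (J i)) (hA : MeasurableSet A) (hAX : A ⊆ X)
    (hnull : μ (A \ ⋃ i ∈ G, J i) = 0) :
    s * μ A ≤ G.card * μ (f '' A) := by
  have hmeas : μ A ≤ ∑ i ∈ G, μ (A ∩ J i) :=
    calc μ A ≤ μ (A ∩ ⋃ i ∈ G, J i) + μ (A \ ⋃ i ∈ G, J i) := measure_le_inter_add_sdiff _ _ _
      _ = μ (⋃ i ∈ G, A ∩ J i) := by rw [hnull, add_zero, inter_iUnion₂]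
      _ ≤ ∑ i ∈ G, μ (A ∩ J i) := measure_biUnion_finset_le _ _
  calc s * μ A ≤ s * ∑ i ∈ G, μ (A ∩ J i) := by gcongr
    _ = ∑ i ∈ G, μ (f '' (A ∩ J i)) := by
      rw [Finset.mul_sum]
      exact Finset.sum_congr rfl fun i hi =>
        (hjac.measure_image_inter hA hAX (hJ i hi) (hfJ i hi)).symm
    _ ≤ ∑ _i ∈ G, μ (f '' A) :=
      Finset.sum_le_sum fun i _ => measure_mono (image_mono inter_subset_left)
    _ = G.card * μ (f '' A) := by rw [Finset.sum_const, nsmul_eq_mul]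

end ConstantJacobian

/-! ### Short intervals and partitions into intervals of injectivity -/

section LinearOrder

variable {α : Type*} [LinearOrder α]

lemma exists_lt_lt_of_two_lt_card {ι : Type*} {G : Finset ι} (hG : 2 < G.card) {x : ι → α}
    (hx : InjOn x G) : ∃ i ∈ G, ∃ j ∈ G, ∃ k ∈ G, x i < x j ∧ x j < x k := by
  have hcard : 3 ≤ (G.image x).card := by rwa [Finset.card_image_of_injOn hx]
  let e : Fin 3 ↪o α := (G.image x).orderEmbOfCardLe hcard
  have he : ∀ a, ∃ i ∈ G, x i = e a := fun a =>
    Finset.mem_image.1 ((G.image x).orderEmbOfCardLe_mem hcard a)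
  obtain ⟨i, hi, hxi⟩ := he 0
  obtain ⟨j, hj, hxj⟩ := he 1
  obtain ⟨k, hk, hxk⟩ := he 2
  refine ⟨i, hi, j, hj, k, hk, ?_, ?_⟩
  · rw [hxi, hxj, e.lt_iff_lt]
    decide
  · rw [hxj, hxk, e.lt_iff_lt]
    decide

lemma subset_Ioo_of_ordConnected {Y : Set α} (hY : Y.OrdConnected) {a b c : α} (ha : a ∉ Y)
    (hb : b ∈ Y) (hc : c ∉ Y) (hab : a < b) (hbc : b < c) : Y ⊆ Ioo a c := fun _ hy =>
  ⟨not_le.1 fun hya => ha (hY.out hy hb ⟨hya, hab.le⟩),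
    not_le.1 fun hcy => hc (hY.out hb hy ⟨hbc.le, hcy⟩)⟩

end LinearOrder

section InjectivityPartition

variable {ι : Type*} {f : ℝ → ℝ} {X A : Set ℝ} {J : ι → Set ℝ} {μ : Measure ℝ} {s : ℝ≥0∞}

/-- The family `J` is a partition of `X` into intervals on each of which `f` is injective. Pieces
may be empty or reduced to a point. -/
structure IsInjectivityPartition (f : ℝ → ℝ) (X : Set ℝ) (J : ι → Set ℝ) : Prop where
  ordConnected : ∀ i, (J i).OrdConnected
  iUnion_eq : ⋃ i, J i = X
  disjoint : Pairwise (Function.onFun Disjoint J)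
  injOn : ∀ i, InjOn f (J i)

lemma exists_pos_forall_lt_diam {α : Type*} [MetricSpace α] [Finite ι] {J : ι → Set α}
    (hJ : ∀ i, Bornology.IsBounded (J i)) :
    ∃ δ > 0, ∀ i, (J i).Nontrivial → δ < diam (J i) := by
  have hsmall : ∀ᶠ δ in 𝓝[>] (0 : ℝ), ∀ i, (J i).Nontrivial → δ < diam (J i) := by
    rw [eventually_all]
    exact fun i => eventually_imp_distrib_left.2 fun hi =>
      mem_nhdsWithin_of_mem_nhds (Iio_mem_nhds (diam_pos hi (hJ i)))
  obtain ⟨δ, hδ, hδpos⟩ := (hsmall.and self_mem_nhdsWithin).exists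
  exact ⟨δ, hδpos, hδ⟩

lemma card_le_two_of_diam_lt {G : Finset ι} (hJ : ∀ i ∈ G, (J i).OrdConnected)
    (hJdisj : Pairwise (Function.onFun Disjoint J)) (hA : Bornology.IsBounded A)
    (hmeet : ∀ i ∈ G, (A ∩ J i).Nonempty) (hlong : ∀ i ∈ G, diam A < diam (J i)) :
    G.card ≤ 2 := by
  by_contra! hG
  choose! x hxA hxJ using hmeet
  have hne : ∀ i ∈ G, ∀ j, i ≠ j → x i ∉ J j := fun i hi j hij =>
    disjoint_left.1 (hJdisj hij) (hxJ i hi)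
  have hx : InjOn x G := fun i hi j hj hxij => by
    by_contra hij
    exact hne i hi j hij (hxij ▸ hxJ j hj)
  obtain ⟨i, hi, j, hj, k, hk, hij, hjk⟩ := exists_lt_lt_of_two_lt_card hG hx
  have hJj : J j ⊆ Ioo (x i) (x k) :=
    subset_Ioo_of_ordConnected (hJ j hj) (hne i hi j fun h => hij.ne (congrArg x h)) (hxJ j hj)
      (hne k hk j fun h => hjk.ne' (congrArg x h)) hij hjk
  refine (hlong j hj).not_ge ?_
  calc diam (J j) ≤ diam (Ioo (x i) (x k)) := diam_mono hJj (isBounded_Ioo _ _)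
    _ = x k - x i := Real.diam_Ioo (hij.trans hjk).le
    _ ≤ dist (x k) (x i) := le_abs_self _
    _ ≤ diam A := dist_le_diam_of_mem hA (hxA k hk) (hxA i hi)

lemma IsInjectivityPartition.measure_image_le [Countable ι] (hpart : IsInjectivityPartition f X J)
    (hjac : HasConstantJacobianOn f X μ s) (hA : MeasurableSet A) (hAX : A ⊆ X) :
    μ (f '' A) ≤ s * μ A :=
  hjac.measure_image_le (fun i => (hpart.ordConnected i).measurableSet) hpart.disjoint hpart.injOn
    hA hAX (hpart.iUnion_eq ▸ hAX)

lemma IsInjectivityPartition.exists_mul_measure_le_two_mul [Finite ι] [NullSingletonClass μ]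
    (hpart : IsInjectivityPartition f X J) (hX : Bornology.IsBounded X)
    (hjac : HasConstantJacobianOn f X μ s) :
    ∃ δ > 0, ∀ A ⊆ X, MeasurableSet A → diam A ≤ δ → s * μ A ≤ 2 * μ (f '' A) := by
  classical
  have := Fintype.ofFinite ι
  have hJX : ∀ i, J i ⊆ X := fun i => hpart.iUnion_eq ▸ subset_iUnion J i
  obtain ⟨δ, hδpos, hδ⟩ := exists_pos_forall_lt_diam fun i => hX.subset (hJX i)
  refine ⟨δ, hδpos, fun A hAX hA hAδ => ?_⟩
  let G : Finset ι := {i | (J i).Nontrivial ∧ (A ∩ J i).Nonempty}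
  have hG : ∀ i ∈ G, (J i).Nontrivial ∧ (A ∩ J i).Nonempty := fun i hi =>
    (Finset.mem_filter.1 hi).2
  have hcard : G.card ≤ 2 :=
    card_le_two_of_diam_lt (fun i _ => hpart.ordConnected i) hpart.disjoint (hX.subset hAX)
      (fun i hi => (hG i hi).2) fun i hi => hAδ.trans_lt (hδ i (hG i hi).1)
  have hcover : A \ ⋃ i ∈ G, J i ⊆ ⋃ i ∈ {i | (J i).Subsingleton}, J i := by
    rintro x ⟨hxA, hxG⟩
    obtain ⟨i, hxi⟩ := mem_iUnion.1 (hpart.iUnion_eq.symm ▸ hAX hxA)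
    refine mem_biUnion (not_nontrivial_iff.1 fun hi => hxG ?_) hxi
    exact mem_biUnion (Finset.mem_filter.2 ⟨Finset.mem_univ i, hi, x, hxA, hxi⟩) hxi
  have hnull : μ (A \ ⋃ i ∈ G, J i) = 0 :=
    measure_mono_null hcover <| Countable.measure_zero
      ((to_countable _).biUnion fun _ hi => hi.countable) μ
  calc s * μ A ≤ G.card * μ (f '' A) :=
        hjac.mul_measure_le_card_mul (fun i _ => (hpart.ordConnected i).measurableSet)
          (fun i _ => hpart.injOn i) hA hAX hnull
    _ ≤ 2 * μ (f '' A) := by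
        gcongr
        exact_mod_cast hcard

end InjectivityPartition

lemma injOn_of_ordConnected_of_deriv_ne_zero {f : ℝ → ℝ} {A : Set ℝ} (hA : A.OrdConnected)
    (hf : ContinuousOn f A) (hderiv : ∀ x ∈ A, deriv f x ≠ 0) : InjOn f A := by
  intro a ha b hb hfab
  by_contra hne
  wlog hab : a < b generalizing a b
  · exact this hb ha hfab.symm (Ne.symm hne) ((not_lt.1 hab).lt_of_ne' hne)
  obtain ⟨c, hc, hfc⟩ := exists_deriv_eq_zero hab (hf.mono (hA.out ha hb)) hfab
  exact hderiv c (hA.out ha hb (Ioo_subset_Icc_self hc)) hfc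

lemma injOn_of_disjoint_crit {f : ℝ → ℝ} {A : Set ℝ} (hf : ContinuousOn f unitI) (hAI : A ⊆ unitI)
    (hA : A.OrdConnected) (hcrit : Disjoint A (Crit f)) : InjOn f A :=
  injOn_of_ordConnected_of_deriv_ne_zero hA (hf.mono hAI) fun _ hx hfx =>
    disjoint_left.1 hcrit hx ⟨hAI hx, hfx⟩

/-! ### Pull-backs -/

section Pullback

variable {α : Type*} [TopologicalSpace α] {f : α → α} {X V C : Set α} {m j : ℕ} {x : α}

/-- The pull-back of `V` by `f^n` that contains `x`, for the dynamics of `f` on `X`. It is empty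
unless `x` is a point of `X` that `f^n` maps into `V`. -/
def pullbackAt (f : α → α) (X V : Set α) (n : ℕ) (x : α) : Set α :=
  connectedComponentIn (X ∩ f^[n] ⁻¹' V) x

/-- The number of times `j < m` at which the pull-back of `V` by `f^(m-j)` along the orbit of `x`
meets `C`. -/
def pullbackCriticality (f : α → α) (X C V : Set α) (m : ℕ) (x : α) : ℕ :=
  Nat.card {j : ℕ // j < m ∧ (pullbackAt f X V (m - j) (f^[j] x) ∩ C).Nonempty}

lemma isPreconnected_pullbackAt : IsPreconnected (pullbackAt f X V m x) :=
  isPreconnected_connectedComponentIn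

lemma pullbackAt_subset : pullbackAt f X V m x ⊆ X :=
  (connectedComponentIn_subset _ _).trans inter_subset_left

lemma mapsTo_iterate_pullbackAt : MapsTo f^[m] (pullbackAt f X V m x) V := fun _ hy =>
  (connectedComponentIn_subset _ _ hy).2

lemma image_iterate_pullbackAt_subset (hf : ContinuousOn f X) (hmaps : MapsTo f X X)
    (hx : x ∈ X ∩ f^[m] ⁻¹' V) (hj : j ≤ m) :
    f^[j] '' pullbackAt f X V m x ⊆ pullbackAt f X V (m - j) (f^[j] x) := by
  refine IsPreconnected.subset_connectedComponentIn
    (isPreconnected_pullbackAt.image _ ((hf.iterate hmaps j).mono pullbackAt_subset))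
    (mem_image_of_mem _ (mem_connectedComponentIn hx)) ?_
  rintro _ ⟨y, hy, rfl⟩
  refine ⟨hmaps.iterate j (pullbackAt_subset hy), ?_⟩
  rw [mem_preimage, ← Function.iterate_add_apply, Nat.sub_add_cancel hj]
  exact mapsTo_iterate_pullbackAt hy

open Classical in
lemma prod_ite_two_one_eq_two_pow_pullbackCriticality {M : Type*} [CommSemiring M] :
    ∏ j ∈ Finset.range m,
      (if (pullbackAt f X V (m - j) (f^[j] x) ∩ C).Nonempty then (2 : M) else 1) =
      2 ^ pullbackCriticality f X C V m x := by
  rw [Finset.prod_ite, Finset.prod_const, Finset.prod_const_one, mul_one, pullbackCriticality]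
  congr 1
  exact (Nat.subtype_card _ fun j => by rw [Finset.mem_filter, Finset.mem_range]).symm

end Pullback

section PullbackMeasure

variable {f : ℝ → ℝ} {X V C : Set ℝ} {m : ℕ} {x : ℝ} {μ : Measure ℝ} {s : ℝ≥0∞}

lemma ordConnected_image_iterate {W : Set ℝ} (hf : ContinuousOn f X) (hmaps : MapsTo f X X)
    (hW : IsPreconnected W) (hWX : W ⊆ X) (k : ℕ) : (f^[k] '' W).OrdConnected :=
  (hW.image _ ((hf.iterate hmaps k).mono hWX)).ordConnected

lemma measure_image_iterate_le {ι : Type*} [Countable ι] {J : ι → Set ℝ} {W : Set ℝ}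
    (hf : ContinuousOn f X) (hmaps : MapsTo f X X) (hpart : IsInjectivityPartition f X J)
    (hjac : HasConstantJacobianOn f X μ s) (hW : IsPreconnected W) (hWX : W ⊆ X) (n : ℕ) :
    μ (f^[n] '' W) ≤ s ^ n * μ W := by
  have hstep : ∀ k, μ (f^[k + 1] '' W) ≤ s * μ (f^[k] '' W) := fun k => by
    rw [Function.iterate_succ', image_comp]
    exact hpart.measure_image_le hjac
      (ordConnected_image_iterate hf hmaps hW hWX k).measurableSet
      ((hmaps.iterate k).mono_left hWX).image_subset
  simpa using le_pow_mul_of_forall_succ_le (a := fun k => μ (f^[k] '' W)) hstep n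

lemma pow_mul_measure_pullbackAt_le {δ : ℝ} (hf : ContinuousOn f X) (hmaps : MapsTo f X X)
    (hX : Bornology.IsBounded X) (hjac : HasConstantJacobianOn f X μ s)
    (hC : ∀ A ⊆ X, A.OrdConnected → Disjoint A C → InjOn f A)
    (htwo : ∀ A ⊆ X, MeasurableSet A → diam A ≤ δ → s * μ A ≤ 2 * μ (f '' A))
    (hx : x ∈ X ∩ f^[m] ⁻¹' V) (hshort : ∀ n y, diam (pullbackAt f X V n y) ≤ δ) :
    s ^ m * μ (pullbackAt f X V m x) ≤
      2 ^ pullbackCriticality f X C V m x * μ (f^[m] '' pullbackAt f X V m x) := by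
  classical
  set W := pullbackAt f X V m x
  have hstep : ∀ j < m, s * μ (f^[j] '' W) ≤
      (if (pullbackAt f X V (m - j) (f^[j] x) ∩ C).Nonempty then 2 else 1) *
        μ (f^[j + 1] '' W) := fun j hj => by
    have hsub : f^[j] '' W ⊆ pullbackAt f X V (m - j) (f^[j] x) :=
      image_iterate_pullbackAt_subset hf hmaps hx hj.le
    have hsubX : f^[j] '' W ⊆ X := hsub.trans pullbackAt_subset
    have hconn : (f^[j] '' W).OrdConnected :=
      ordConnected_image_iterate hf hmaps isPreconnected_pullbackAt pullbackAt_subset j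
    rw [Function.iterate_succ', image_comp]
    split_ifs with hmeet
    · exact htwo _ hsubX hconn.measurableSet
        ((diam_mono hsub (hX.subset pullbackAt_subset)).trans (hshort _ _))
    · have hdisj : Disjoint (f^[j] '' W) C :=
        (disjoint_iff_inter_eq_empty.2 (not_nonempty_iff_eq_empty.1 hmeet)).mono_left hsub
      rw [one_mul, hjac _ hconn.measurableSet hsubX (hC _ hsubX hconn hdisj)]
  rw [← prod_ite_two_one_eq_two_pow_pullbackCriticality]
  simpa using pow_mul_le_prod_mul_of_forall_mul_le (a := fun k => μ (f^[k] '' W)) hstep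

end PullbackMeasure

/-! ### Topological exactness makes pull-backs short -/

lemma unitI_nonempty : unitI.Nonempty := nonempty_Icc.2 zero_le_one

lemma isCompact_unitI : IsCompact unitI := isCompact_Icc

lemma ballI_eq_ball_inter (x r : ℝ) : ballI x r = ball x r ∩ unitI := by
  ext y
  rw [ballI, mem_ofPred_eq, mem_inter_iff, mem_ball', Real.dist_eq, and_comm]

lemma exists_ballI_subset_of_lt_diam {A : Set ℝ} (hA : A.OrdConnected) (hAI : A ⊆ unitI) {ε : ℝ}
    (hε : 0 ≤ ε) (hεA : ε < diam A) : ∃ x ∈ unitI, ballI x (ε / 2) ⊆ A := by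
  obtain ⟨a, ha, b, hb, hab⟩ : ∃ a ∈ A, ∃ b ∈ A, ε < b - a := by
    by_contra! hle
    exact hεA.not_ge <| diam_le_of_forall_dist_le hε fun a ha b hb =>
      abs_sub_le_iff.2 ⟨hle b hb a ha, hle a ha b hb⟩
  refine ⟨(a + b) / 2, hAI (hA.out ha hb ⟨by linarith, by linarith⟩), ?_⟩
  rintro y ⟨-, hy⟩
  obtain ⟨hlow, hhigh⟩ := abs_lt.1 hy
  exact hA.out ha hb ⟨by linarith, by linarith⟩

namespace TopExact

variable {f : ℝ → ℝ} {ε : ℝ}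

lemma unitI_subset_image (hex : TopExact f) (hmaps : MapsTo f unitI unitI) :
    unitI ⊆ f '' unitI := by
  obtain ⟨n, hn, honto⟩ := hex unitI unitI_nonempty subset_rfl
    ⟨univ, isOpen_univ, (univ_inter _).symm⟩
  obtain ⟨k, rfl⟩ := Nat.exists_eq_add_of_le' hn
  calc unitI = f '' (f^[k] '' unitI) := by rw [← image_comp, ← Function.iterate_succ', honto]
    _ ⊆ f '' unitI := image_mono (hmaps.iterate k).image_subset

lemma eventually_unitI_subset_image_ballI (hex : TopExact f) (hmaps : MapsTo f unitI unitI) {x : ℝ}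
    (hx : x ∈ unitI) (hε : 0 < ε) : ∀ᶠ n in atTop, unitI ⊆ f^[n] '' ballI x ε := by
  obtain ⟨N, -, honto⟩ := hex (ballI x ε) ⟨x, hx, by rwa [sub_self, abs_zero]⟩ (sep_subset _ _)
    ⟨ball x ε, isOpen_ball, ballI_eq_ball_inter x ε⟩
  filter_upwards [eventually_ge_atTop N] with n hn
  induction n, hn using Nat.le_induction with
  | base => exact honto.ge
  | succ n _ ih =>
    rw [Function.iterate_succ', image_comp]
    exact (hex.unitI_subset_image hmaps).trans (image_mono ih)

lemma eventually_forall_unitI_subset_image_ballI (hex : TopExact f) (hmaps : MapsTo f unitI unitI)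
    (hε : 0 < ε) : ∀ᶠ n in atTop, ∀ x ∈ unitI, unitI ⊆ f^[n] '' ballI x ε := by
  obtain ⟨t, htI, htfin, hcover⟩ := isCompact_unitI.finite_cover_balls (half_pos hε)
  have hcenters : ∀ᶠ n in atTop, ∀ y ∈ t, unitI ⊆ f^[n] '' ballI y (ε / 2) :=
    (eventually_all_finite htfin).2 fun y hy =>
      hex.eventually_unitI_subset_image_ballI hmaps (htI hy) (half_pos hε)
  filter_upwards [hcenters] with n hn x hx
  obtain ⟨y, hy, hxy⟩ := mem_iUnion₂.1 (hcover hx)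
  refine (hn y hy).trans (image_mono ?_)
  rw [ballI_eq_ball_inter, ballI_eq_ball_inter]
  exact inter_subset_inter_left _ (ball_subset (by linarith [mem_ball'.1 hxy]))

end TopExact

lemma exists_diam_lt_forall_not_unitI_subset_image {ι : Type*} [Finite ι] {g : ι → ℝ → ℝ}
    (hg : ∀ i, ContinuousOn (g i) unitI) :
    ∃ τ > 0, ∀ V ⊆ unitI, diam V < τ → ∀ i, ¬ unitI ⊆ g i '' V := by
  have hclose : ∀ᶠ τ in 𝓝[>] (0 : ℝ), ∀ i, ∀ x ∈ unitI, ∀ y ∈ unitI,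
      dist x y < τ → dist (g i x) (g i y) < 1 := by
    refine eventually_all.2 fun i => ?_
    obtain ⟨δ, hδpos, hδ⟩ := Metric.uniformContinuousOn_iff.1
      (isCompact_unitI.uniformContinuousOn_of_continuous (hg i)) 1 one_pos
    filter_upwards [Ioo_mem_nhdsGT hδpos] with τ hτ x hx y hy hxy
    exact hδ x hx y hy (hxy.trans hτ.2)
  obtain ⟨τ, hτ, hτpos⟩ := (hclose.and self_mem_nhdsWithin).exists
  refine ⟨τ, hτpos, fun V hV hVτ i honto => ?_⟩
  obtain ⟨x, hx, hx0⟩ := honto (left_mem_Icc.2 zero_le_one)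
  obtain ⟨y, hy, hy1⟩ := honto (right_mem_Icc.2 zero_le_one)
  have hxy : dist x y < τ :=
    (dist_le_diam_of_mem (isCompact_unitI.isBounded.subset hV) hx hy).trans_lt hVτ
  have hlt := hτ i x (hV hx) y (hV hy) hxy
  norm_num [hx0, hy1] at hlt

lemma TopExact.exists_diam_pullbackAt_le {f : ℝ → ℝ} {ε : ℝ} (hex : TopExact f)
    (hf : ContinuousOn f unitI) (hmaps : MapsTo f unitI unitI) (hε : 0 < ε) :
    ∃ τ > 0, ∀ V ⊆ unitI, diam V < τ → ∀ n x, diam (pullbackAt f unitI V n x) ≤ ε := by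
  obtain ⟨N, hN⟩ := eventually_atTop.1
    (hex.eventually_forall_unitI_subset_image_ballI hmaps (half_pos hε))
  obtain ⟨τ, hτpos, hτ⟩ := exists_diam_lt_forall_not_unitI_subset_image
    fun i : Fin (N + 1) => hf.iterate hmaps i
  refine ⟨τ, hτpos, fun V hV hVτ n x => ?_⟩
  by_contra! hlong
  obtain ⟨y, hy, hball⟩ := exists_ballI_subset_of_lt_diam
    isPreconnected_pullbackAt.ordConnected pullbackAt_subset hε.le hlong
  refine hτ V hV hVτ ⟨max n N - n, by lia⟩ ?_
  calc unitI ⊆ f^[max n N] '' ballI y (ε / 2) := hN _ (le_max_right n N) y hy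
    _ ⊆ f^[max n N] '' pullbackAt f unitI V n x := image_mono hball
    _ = f^[max n N - n] '' (f^[n] '' pullbackAt f unitI V n x) := by
      rw [← image_comp, ← Function.iterate_add, Nat.sub_add_cancel (le_max_left n N)]
    _ ⊆ f^[max n N - n] '' V := image_mono mapsTo_iterate_pullbackAt.image_subset

/-! ### Measures of pull-backs -/

lemma ofReal_exp_neg_mul_mul_ofReal_exp_pow (m : ℕ) (h : ℝ) :
    ENNReal.ofReal (Real.exp (-(m : ℝ) * h)) * ENNReal.ofReal (Real.exp h) ^ m = 1 := by
  rw [← ENNReal.ofReal_pow (Real.exp_pos h).le, ← ENNReal.ofReal_mul (Real.exp_pos _).le,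
    ← Real.exp_nat_mul, ← Real.exp_add, neg_mul, neg_add_cancel, Real.exp_zero, ENNReal.ofReal_one]

theorem pullback_measure_comparison_general {f : ℝ → ℝ} {μ : Measure ℝ} [NullSingletonClass μ]
    {C : Set ℝ} {h : ℝ} (hmm : Multimodal f) (hex : TopExact f)
    (hjac : HasConstantJacobianOn f unitI μ (ENNReal.ofReal (Real.exp h)))
    (hC : ∀ A ⊆ unitI, A.OrdConnected → Disjoint A C → InjOn f A) :
    ∃ τ > 0, ∀ V ⊆ unitI, diam V < τ → ∀ m : ℕ, ∀ x ∈ unitI ∩ f^[m] ⁻¹' V,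
      let W := pullbackAt f unitI V m x
      let D := pullbackCriticality f unitI C V m x
      let E := ENNReal.ofReal (Real.exp (-(m : ℝ) * h))
      E * μ (f^[m] '' W) ≤ μ W ∧ μ W ≤ 2 ^ D * E * μ (f^[m] '' W) ∧
        2 ^ D * E * μ (f^[m] '' W) ≤ 2 ^ D * E * μ V := by
  obtain ⟨hf, hmaps, -, n, J, hJconn, hJunion, hJdisj, hJinj⟩ := hmm
  have hpart : IsInjectivityPartition f unitI J := ⟨hJconn, hJunion, hJdisj, hJinj⟩
  have hbdd := isCompact_unitI.isBounded
  obtain ⟨δ, hδpos, htwo⟩ := hpart.exists_mul_measure_le_two_mul hbdd hjac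
  obtain ⟨τ, hτpos, hshort⟩ := hex.exists_diam_pullbackAt_le hf hmaps hδpos
  refine ⟨τ, hτpos, fun V hV hVτ m x hx => ?_⟩
  intro W D E
  have hcancel : E * (ENNReal.ofReal (Real.exp h) ^ m * μ W) = μ W := by
    rw [← mul_assoc, ofReal_exp_neg_mul_mul_ofReal_exp_pow, one_mul]
  refine ⟨?_, ?_, ?_⟩
  · calc E * μ (f^[m] '' W) ≤ E * (ENNReal.ofReal (Real.exp h) ^ m * μ W) := by
          gcongr E * ?_
          exact measure_image_iterate_le hf hmaps hpart hjac isPreconnected_pullbackAt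
            pullbackAt_subset m
      _ = μ W := hcancel
  · calc μ W = E * (ENNReal.ofReal (Real.exp h) ^ m * μ W) := hcancel.symm
      _ ≤ E * (2 ^ D * μ (f^[m] '' W)) := by
          gcongr E * ?_
          exact pow_mul_measure_pullbackAt_le hf hmaps hbdd hjac hC htwo hx (hshort V hV hVτ)
      _ = 2 ^ D * E * μ (f^[m] '' W) := by ring
  · gcongr
    exact mapsTo_iterate_pullbackAt.image_subset

/-- **Lemma 4.4**: comparison of the maximal entropy measure of a pull-back with the
measure of its image. -/
theorem pullback_measure_comparison (f : ℝ → ℝ) (μ : Measure ℝ)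
    (hmm : Multimodal f) (hc3 : C3Nonflat f) (hrep : AllPeriodicRepelling f)
    (hex : TopExact f) (hμ : IsMaxEntropyLike f μ (Real.exp (htop f))) :
    ∃ τ : ℝ, 0 < τ ∧ ∀ V : Set ℝ,
      V ⊆ unitI → V.OrdConnected → V.Nonempty → (∃ U : Set ℝ, IsOpen U ∧ V = U ∩ unitI) →
      Metric.diam V < τ →
      ∀ m : ℕ, 1 ≤ m → ∀ x₀ ∈ unitI ∩ f^[m] ⁻¹' V, ∀ W : Set ℝ,
        W = connectedComponentIn (unitI ∩ f^[m] ⁻¹' V) x₀ →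
        ∀ D : ℕ, D = Nat.card {j : ℕ // j < m ∧
          (connectedComponentIn (unitI ∩ f^[m - j] ⁻¹' V) (f^[j] x₀) ∩ Crit f).Nonempty} →
        ENNReal.ofReal (Real.exp (-(m : ℝ) * htop f)) * μ (f^[m] '' W) ≤ μ W ∧
        μ W ≤ 2 ^ D * ENNReal.ofReal (Real.exp (-(m : ℝ) * htop f)) * μ (f^[m] '' W) ∧
        2 ^ D * ENNReal.ofReal (Real.exp (-(m : ℝ) * htop f)) * μ (f^[m] '' W) ≤
          2 ^ D * ENNReal.ofReal (Real.exp (-(m : ℝ) * htop f)) * μ V := by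
  have : NullSingletonClass μ := ⟨hμ.2.2.2.1⟩
  obtain ⟨τ, hτpos, hτ⟩ := pullback_measure_comparison_general hmm hex hμ.2.2.2.2.2
    fun _ => injOn_of_disjoint_crit hmm.1
  exact ⟨τ, hτpos, fun V hV _ _ _ hVτ m _ x₀ hx₀ _ hW _ hD => hW ▸ hD ▸ hτ V hV hVτ m x₀ hx₀⟩

end
end

section
/- Let f: [0,1] → [0,1] be a multimodal map that is topologically exact. Then there exists a non-atomic Borel probability measure μ_f on [0,1] whose topological support equals [0,1] and whose Jacobian with respect to f is constant equal to exp(h_top(f)), i.e., μ_f(f(A)) = exp(h_top(f))·μ_f(A) for every Borel set A ⊂ [0,1] on which f is injective. -/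
/-!
Let `C` be a finite set containing the end points of the monotonicity intervals of `f`. The points
whose orbit meets `C` before time `n` cut the unit interval into intervals on which `f^n` is
injective; twice their number plus one is submultiplicative in `n`, and topological exactness makes
it grow exponentially, at a rate `s > 1`.

Consider `∑ n, t ^ n • (counting measure on f^{-n}(C))` for `t < s⁻¹`. Its total mass diverges as
`t` increases to `s⁻¹`. If `f` is injective on `A`, then the mass of `f(A)` is that of `A` divided
by `t`, up to the constant term of the series. Normalising and passing to the limit along an
ultrafilter therefore gives a finitely additive probability `Λ` on all subsets with
`Λ (f '' A) = s * Λ A` whenever `f` is injective on `A`.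

A set on which `f^n` is injective has `Λ`-mass at most `s⁻¹ ^ n`. Hence points are null and the
distribution function `x ↦ Λ (Iic x)` is continuous; by exactness it is strictly increasing on the
unit interval. Its Stieltjes measure agrees with `Λ` on intervals and so inherits the Jacobian
`s`, first on Borel subsets of the monotonicity intervals and then on all Borel sets where `f` is
injective.

It remains to see that the topological entropy is `log s`. In the coordinate `x ↦ Λ (Iic x)` the
map is `s`-Lipschitz, so about `s ^ n` equally spaced points form an `(n, ε)`-cover: the entropy is
at most `log s`. Conversely, if `ε` is so small that an `ε`-ball contains at most one cut point of
`f^N`, such a ball is the union of three sets on which `f^N` is injective, so a dynamical ball of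
length `N * m` has mass at most `(3 * s⁻¹ ^ N) ^ m`; the entropy is therefore at least
`log s - log 3 / N` for every `N ≥ 1`.
-/

open Set MeasureTheory Metric Filter

noncomputable section

open scoped ENNReal Topology

/-! ### Laps of the iterates -/

section Laps

variable {α β : Type*}

/-- `f` is injective on the intervals of `I` cut out by `C`: those that contain no point of `C`. -/
def PiecewiseInjOn [Preorder α] (f : α → β) (I C : Set α) : Prop :=
  ∀ ⦃K : Set α⦄, K ⊆ I → K.OrdConnected → Disjoint K C → InjOn f K

/-- The points of `I` whose `f`-orbit visits `C` before time `n`; they cut `I` into intervals on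
which `f^[n]` is injective as soon as `C` does so for `f`. -/
def visitSet (f : α → α) (I C : Set α) (n : ℕ) : Set α := {x ∈ I | ∃ k < n, f^[k] x ∈ C}

/-- An upper bound for the cardinality of the fibres of `f^[n]` in `I` when `C` cuts `I` into
intervals of injectivity of `f`; contrary to the maximal cardinality of a fibre, it is
controlled from above by the number of preimages of points of `C`. -/
def lapBound (f : α → α) (I C : Set α) (n : ℕ) : ℕ := 2 * (visitSet f I C n).ncard + 1

@[simp]
theorem visitSet_zero (f : α → α) (I C : Set α) : visitSet f I C 0 = ∅ := by simp [visitSet]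

theorem visitSet_one (f : α → α) (I C : Set α) : visitSet f I C 1 = I ∩ C := by
  ext x
  simp [visitSet]

theorem visitSet_add {f : α → α} {I : Set α} (hf : MapsTo f I I) (C : Set α) (m n : ℕ) :
    visitSet f I C (m + n) = visitSet f I C m ∪ I ∩ f^[m] ⁻¹' visitSet f I C n := by
  ext x
  constructor
  · rintro ⟨hx, k, hk, hkC⟩
    rcases lt_or_ge k m with hkm | hmk
    · exact Or.inl ⟨hx, k, hkm, hkC⟩
    · refine Or.inr ⟨hx, hf.iterate m hx, k - m, by lia, ?_⟩
      rwa [← Function.iterate_add_apply, Nat.sub_add_cancel hmk]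
  · rintro (⟨hx, k, hk, hkC⟩ | ⟨hx, -, k, hk, hkC⟩)
    · exact ⟨hx, k, by lia, hkC⟩
    · exact ⟨hx, k + m, by lia, by rwa [Function.iterate_add_apply]⟩

theorem visitSet_succ {f : α → α} {I : Set α} (hf : MapsTo f I I) (C : Set α) (n : ℕ) :
    visitSet f I C (n + 1) = visitSet f I C n ∪ I ∩ f^[n] ⁻¹' C := by
  rw [visitSet_add hf, visitSet_one]
  congr 1
  ext x
  exact ⟨fun hx ↦ ⟨hx.1, hx.2.2⟩, fun hx ↦ ⟨hx.1, hf.iterate n hx.1, hx.2⟩⟩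

theorem encard_visitSet_le_sum {f : α → α} {I : Set α} (hf : MapsTo f I I) (C : Set α) (n : ℕ) :
    (visitSet f I C n).encard ≤ ∑ k ∈ Finset.range n, (I ∩ f^[k] ⁻¹' C).encard := by
  induction n with
  | zero => simp
  | succ n ih =>
    rw [visitSet_succ hf, Finset.sum_range_succ]
    exact (encard_union_le _ _).trans (by gcongr)

theorem encard_inter_preimage_le_mul {A : Set α} {g : α → β} {T : Set β} {b : ℕ∞} (hT : T.Finite)
    (hb : ∀ y ∈ T, (A ∩ g ⁻¹' {y}).encard ≤ b) : (A ∩ g ⁻¹' T).encard ≤ b * T.encard := by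
  have hcover : A ∩ g ⁻¹' T = ⋃ y ∈ hT.toFinset, A ∩ g ⁻¹' {y} := by
    ext x
    simp
  calc (A ∩ g ⁻¹' T).encard
      ≤ ∑ y ∈ hT.toFinset, (A ∩ g ⁻¹' {y}).encard := by
        rw [hcover]
        exact hT.toFinset.set_encard_biUnion_le _
    _ ≤ ∑ _y ∈ hT.toFinset, b := Finset.sum_le_sum fun y hy ↦ hb y (hT.mem_toFinset.1 hy)
    _ = b * T.encard := by
        rw [Finset.sum_const, nsmul_eq_mul, mul_comm, hT.encard_eq_coe_toFinset_card]

theorem piecewiseInjOn_endpoints [ConditionallyCompleteLinearOrder α] {ι : Type*} {f : α → β}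
    {I : Set α} {J : ι → Set α} (hI : I ⊆ ⋃ i, J i) (hJ : ∀ i, (J i).OrdConnected)
    (hbelow : ∀ i, BddBelow (J i)) (habove : ∀ i, BddAbove (J i)) (hinj : ∀ i, InjOn f (J i)) :
    PiecewiseInjOn f I (range (fun i ↦ sInf (J i)) ∪ range (fun i ↦ sSup (J i))) := by
  intro K hKI hK hdisj
  rcases K.eq_empty_or_nonempty with rfl | ⟨x, hx⟩
  · exact injOn_empty f
  obtain ⟨i, hxi⟩ := mem_iUnion.1 (hI (hKI hx))
  -- If `K` left `J i`, it would contain an end point of `J i`.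
  refine (hinj i).mono fun y hy ↦ by_contra fun hyi ↦ ?_
  rcases lt_or_ge y x with hyx | hxy
  · have hlower : ∀ z ∈ J i, y ≤ z := fun z hz ↦
      le_of_not_gt fun hzy ↦ hyi ((hJ i).out hz hxi ⟨hzy.le, hyx.le⟩)
    have hmem : sInf (J i) ∈ K :=
      hK.out hy hx ⟨le_csInf ⟨x, hxi⟩ hlower, csInf_le (hbelow i) hxi⟩
    exact disjoint_left.1 hdisj hmem (Or.inl ⟨i, rfl⟩)
  · have hupper : ∀ z ∈ J i, z ≤ y := fun z hz ↦
      le_of_not_gt fun hyz ↦ hyi ((hJ i).out hxi hz ⟨hxy, hyz.le⟩)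
    have hmem : sSup (J i) ∈ K :=
      hK.out hx hy ⟨le_csSup (habove i) hxi, csSup_le ⟨x, hxi⟩ hupper⟩
    exact disjoint_left.1 hdisj hmem (Or.inr ⟨i, rfl⟩)

namespace PiecewiseInjOn

section LinearOrder

variable [LinearOrder α] {g : α → β} {I D : Set α}

/-- Two points of a fibre are separated by a point `p` of `D`, which is counted by the first summand
if it lies to the right of the smaller point, and by the second one if it is that point. -/
theorem strictMonoOn_ncard_add_ncard (hg : PiecewiseInjOn g I D) (hI : I.OrdConnected)
    (hD : D.Finite) (y : β) :
    StrictMonoOn (fun x ↦ (D ∩ Iic x).ncard + (D ∩ Iio x).ncard) (I ∩ g ⁻¹' {y}) := by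
  rintro x ⟨hxI, hxy⟩ x' ⟨hxI', hxy'⟩ hlt
  have hmeet : ¬ Disjoint (Icc x x') D := fun hdisj ↦
    hlt.ne (hg (hI.out hxI hxI') ordConnected_Icc hdisj (left_mem_Icc.2 hlt.le)
      (right_mem_Icc.2 hlt.le) (hxy.trans hxy'.symm))
  obtain ⟨p, ⟨hxp, hpx'⟩, hpD⟩ := not_disjoint_iff.1 hmeet
  have hIic : D ∩ Iic x ⊆ D ∩ Iic x' := by gcongr
  have hIio : D ∩ Iio x ⊆ D ∩ Iio x' := by gcongr
  have hfin : (D ∩ Iic x').Finite := hD.inter_of_left _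
  have hfin' : (D ∩ Iio x').Finite := hD.inter_of_left _
  rcases hxp.lt_or_eq with hxp | rfl
  · exact add_lt_add_of_lt_of_le
      (ncard_lt_ncard ⟨hIic, fun h ↦ (h ⟨hpD, hpx'⟩).2.not_gt hxp⟩ hfin)
      (ncard_le_ncard hIio hfin')
  · exact add_lt_add_of_le_of_lt (ncard_le_ncard hIic hfin)
      (ncard_lt_ncard ⟨hIio, fun h ↦ (h ⟨hpD, hlt⟩).2.false⟩ hfin')

theorem encard_fiber_le (hg : PiecewiseInjOn g I D) (hI : I.OrdConnected) (hD : D.Finite) (y : β) :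
    (I ∩ g ⁻¹' {y}).encard ≤ ((2 * D.ncard + 1 : ℕ) : ℕ∞) := by
  have hmaps : MapsTo (fun x ↦ (D ∩ Iic x).ncard + (D ∩ Iio x).ncard) (I ∩ g ⁻¹' {y})
      (Finset.range (2 * D.ncard + 1)) := fun x _ ↦ by
    have hle := ncard_inter_le_ncard_left D (Iic x) hD
    have hlt := ncard_inter_le_ncard_left D (Iio x) hD
    simp only [Finset.coe_range, mem_Iio]
    lia
  simpa only [encard_coe_eq_coe_finsetCard, Finset.card_range] using
    encard_le_encard_of_injOn hmaps (hg.strictMonoOn_ncard_add_ncard hI hD y).injOn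

theorem encard_preimage_le (hg : PiecewiseInjOn g I D) (hI : I.OrdConnected) (hD : D.Finite)
    {T : Set β} (hT : T.Finite) :
    (I ∩ g ⁻¹' T).encard ≤ ((2 * D.ncard + 1 : ℕ) : ℕ∞) * T.encard :=
  encard_inter_preimage_le_mul hT fun y _ ↦ hg.encard_fiber_le hI hD y

end LinearOrder

variable [ConditionallyCompleteLinearOrder α] [TopologicalSpace α] [OrderTopology α]
  [DenselyOrdered α] {f : α → α} {I C : Set α}

theorem iterate (hC : PiecewiseInjOn f I C) (hf : ContinuousOn f I) (hmaps : MapsTo f I I) (n : ℕ) :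
    PiecewiseInjOn f^[n] I (visitSet f I C n) := by
  induction n with
  | zero => exact fun K _ _ _ ↦ injOn_id K
  | succ n ih =>
    intro K hKI hK hdisj
    have hinj : InjOn f K := hC hKI hK <| disjoint_left.2 fun x hx hxC ↦
      disjoint_left.1 hdisj hx ⟨hKI hx, 0, n.succ_pos, hxC⟩
    have himage : (f '' K).OrdConnected :=
      (hK.isPreconnected.image f (hf.mono hKI)).ordConnected
    have hdisj_image : Disjoint (f '' K) (visitSet f I C n) := by
      rw [disjoint_left]
      rintro _ ⟨x, hx, rfl⟩ ⟨-, k, hk, hkC⟩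
      exact disjoint_left.1 hdisj hx ⟨hKI hx, k + 1, by lia, hkC⟩
    rw [Function.iterate_succ]
    exact (ih ((hmaps.mono_left hKI).image_subset) himage hdisj_image).comp hinj (mapsTo_image f K)

theorem finite_visitSet (hC : PiecewiseInjOn f I C) (hf : ContinuousOn f I) (hmaps : MapsTo f I I)
    (hI : I.OrdConnected) (hfin : C.Finite) (n : ℕ) : (visitSet f I C n).Finite := by
  induction n with
  | zero => simp
  | succ n ih =>
    rw [visitSet_succ hmaps]
    refine ih.union (finite_of_encard_le_coe (k := (2 * (visitSet f I C n).ncard + 1) * C.ncard) ?_)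
    push_cast
    rw [hfin.cast_ncard_eq]
    exact_mod_cast (hC.iterate hf hmaps n).encard_preimage_le hI ih hfin

theorem encard_preimage_iterate_le (hC : PiecewiseInjOn f I C) (hf : ContinuousOn f I)
    (hmaps : MapsTo f I I) (hI : I.OrdConnected) (hfin : C.Finite) (n : ℕ) {T : Set α}
    (hT : T.Finite) : (I ∩ f^[n] ⁻¹' T).encard ≤ lapBound f I C n * T.encard :=
  (hC.iterate hf hmaps n).encard_preimage_le hI (hC.finite_visitSet hf hmaps hI hfin n) hT

theorem lapBound_add_le (hC : PiecewiseInjOn f I C) (hf : ContinuousOn f I) (hmaps : MapsTo f I I)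
    (hI : I.OrdConnected) (hfin : C.Finite) (m n : ℕ) :
    lapBound f I C (m + n) ≤ lapBound f I C m * lapBound f I C n := by
  have hfinite := hC.finite_visitSet hf hmaps hI hfin
  have hle : (visitSet f I C (m + n)).ncard ≤
      (visitSet f I C m).ncard + lapBound f I C m * (visitSet f I C n).ncard := by
    rw [← Nat.cast_le (α := ℕ∞)]
    push_cast
    rw [(hfinite _).cast_ncard_eq, (hfinite _).cast_ncard_eq, (hfinite _).cast_ncard_eq,
      visitSet_add hmaps]
    exact (encard_union_le _ _).trans
      (by gcongr; exact hC.encard_preimage_iterate_le hf hmaps hI hfin m (hfinite n))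
  simp only [lapBound] at hle ⊢
  lia

end PiecewiseInjOn

end Laps

/-! ### Exponential growth -/

section Growth

/-- `s` is the exponential growth rate of the submultiplicative sequence `e`, that is, the limit
and the infimum of the `n`-th roots of `e n`. -/
structure IsGrowthRate (e : ℕ → ℝ≥0∞) (s : ℝ≥0∞) : Prop where
  pow_le : ∀ n, s ^ n ≤ e n
  eventually_le_pow : ∀ r > s, ∀ᶠ n in atTop, e n ≤ r ^ n

theorem exists_isGrowthRate {e : ℕ → ℕ} (hpos : ∀ n, 0 < e n)
    (hmul : ∀ m n, e (m + n) ≤ e m * e n) : ∃ s, IsGrowthRate (fun n ↦ e n) s := by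
  have hpos' : ∀ n, (0 : ℝ) < e n := fun n ↦ Nat.cast_pos.2 (hpos n)
  have hsub : Subadditive fun n ↦ Real.log (e n) := fun m n ↦ by
    rw [← Real.log_mul (hpos' m).ne' (hpos' n).ne']
    exact Real.log_le_log (hpos' _) (mod_cast hmul m n)
  have hbdd : BddBelow (range fun n ↦ Real.log (e n) / n) :=
    ⟨0, forall_mem_range.2 fun n ↦ div_nonneg (Real.log_natCast_nonneg _) n.cast_nonneg⟩
  refine ⟨ENNReal.ofReal (Real.exp hsub.lim), fun n ↦ ?_, fun r hr ↦ ?_⟩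
  · rw [← ENNReal.ofReal_pow (Real.exp_pos _).le, ENNReal.ofReal_le_natCast,
      ← Real.exp_nat_mul, ← Real.le_log_iff_exp_le (hpos' n)]
    rcases eq_or_ne n 0 with rfl | hn
    · simpa using Real.log_natCast_nonneg _
    · rw [mul_comm]
      exact (le_div_iff₀ (by positivity)).1 (hsub.lim_le_div hbdd hn)
  · rcases eq_or_ne r ∞ with rfl | hr_top
    · filter_upwards [eventually_ne_atTop 0] with n hn
      simp [ENNReal.top_pow hn]
    have hr_real : Real.exp hsub.lim < r.toReal :=
      (ENNReal.ofReal_lt_iff_lt_toReal (Real.exp_pos _).le hr_top).1 hr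
    have hr_pos : 0 < r.toReal := (Real.exp_pos _).trans hr_real
    filter_upwards [(hsub.tendsto_lim hbdd).eventually_lt_const
      ((Real.lt_log_iff_exp_lt hr_pos).2 hr_real), eventually_gt_atTop 0] with n hlt hn
    have hlog : Real.log (e n) ≤ Real.log (r.toReal ^ n) := by
      rw [Real.log_pow, mul_comm]
      exact ((div_lt_iff₀ (Nat.cast_pos.2 hn)).1 hlt).le
    rw [← ENNReal.ofReal_toReal hr_top, ← ENNReal.ofReal_pow hr_pos.le]
    exact (ENNReal.natCast_le_ofReal (hpos n).ne').2
      ((Real.log_le_log_iff (hpos' n) (by positivity)).1 hlog)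

namespace IsGrowthRate

variable {e : ℕ → ℝ≥0∞} {s : ℝ≥0∞}

theorem ne_top (h : IsGrowthRate e s) (he : e 1 ≠ ∞) : s ≠ ∞ :=
  ne_top_of_le_ne_top he (by simpa using h.pow_le 1)

theorem le_pow_of_pow_le (h : IsGrowthRate e s) {b : ℝ≥0∞} {N : ℕ} (hN : N ≠ 0)
    (hb : ∀ k, b ^ k ≤ e (N * k)) : b ≤ s ^ N := by
  have hle : ∀ r > s, b ≤ r ^ N := fun r hr ↦ by
    have hsub : Tendsto (fun k : ℕ ↦ N * k) atTop atTop := tendsto_id.const_mul_atTop' hN.bot_lt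
    obtain ⟨k, hk, hk0⟩ := ((hsub.eventually (h.eventually_le_pow r hr)).and
      (eventually_ne_atTop 0)).exists
    exact (ENNReal.pow_le_pow_left_iff hk0).1 (((hb k).trans hk).trans_eq (pow_mul r N k))
  rcases eq_or_ne s ∞ with rfl | hs
  · simp [ENNReal.top_pow hN]
  · have : (𝓝[>] s).NeBot := nhdsGT_neBot_of_exists_gt ⟨∞, hs.lt_top⟩
    exact ge_of_tendsto (x := 𝓝[>] s)
      (((ENNReal.continuous_pow N).tendsto s).mono_left nhdsWithin_le_nhds)
      (eventually_nhdsWithin_of_forall hle)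

theorem tsum_pow_mul_ne_top (h : IsGrowthRate e s) (he : ∀ n, e n ≠ ∞) {t : ℝ≥0∞} (ht : t < s⁻¹) :
    ∑' n, t ^ n * e n ≠ ∞ := by
  obtain ⟨u, htu, hus⟩ := exists_between ht
  have hu0 : u ≠ 0 := htu.ne_bot
  have hut : u ≠ ∞ := hus.ne_top
  have ht_top : t ≠ ∞ := ht.ne_top
  obtain ⟨N, hN⟩ := eventually_atTop.1
    (h.eventually_le_pow u⁻¹ (ENNReal.lt_inv_iff_lt_inv.1 hus))
  have htail : ∑' n, t ^ (n + N) * e (n + N) ≤ ∑' n, (t * u⁻¹) ^ n :=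
    calc ∑' n, t ^ (n + N) * e (n + N) ≤ ∑' n, (t * u⁻¹) ^ (n + N) := by
          gcongr with n
          rw [mul_pow]
          gcongr
          exact hN _ (by lia)
      _ ≤ ∑' n, (t * u⁻¹) ^ n :=
          ENNReal.tsum_comp_le_tsum_of_injective (add_left_injective N) _
  have hgeom : ∑' n, (t * u⁻¹) ^ n ≠ ∞ := by
    rw [ENNReal.tsum_geometric, ENNReal.inv_ne_top, ← div_eq_mul_inv]
    exact (tsub_pos_of_lt ((ENNReal.div_lt_iff (.inl hu0) (.inl hut)).2 (by rwa [one_mul]))).ne'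
  rw [← ENNReal.summable.sum_add_tsum_nat_add' (k := N)]
  exact ENNReal.add_ne_top.2 ⟨ENNReal.sum_ne_top.2 fun n _ ↦
    ENNReal.mul_ne_top (ENNReal.pow_ne_top ht_top) (he n), ne_top_of_le_ne_top hgeom htail⟩

end IsGrowthRate

theorem tsum_mul_tsum_eq_tsum_antidiagonal (f g : ℕ → ℝ≥0∞) :
    (∑' n, f n) * ∑' n, g n = ∑' n, ∑ p ∈ Finset.HasAntidiagonal.antidiagonal n, f p.1 * g p.2 := by
  calc (∑' n, f n) * ∑' n, g n = ∑' p : ℕ × ℕ, f p.1 * g p.2 := by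
        simp_rw [ENNReal.tsum_prod', ENNReal.tsum_mul_left, ENNReal.tsum_mul_right]
    _ = ∑' q : Σ n, Finset.HasAntidiagonal.antidiagonal n, f q.2.1.1 * g q.2.1.2 :=
        (Finset.HasAntidiagonal.sigmaAntidiagonalEquivProd.tsum_eq _).symm
    _ = ∑' n, ∑ p ∈ Finset.HasAntidiagonal.antidiagonal n, f p.1 * g p.2 := by
        simp_rw [ENNReal.tsum_sigma', tsum_fintype,
          Finset.sum_coe_sort _ fun p : ℕ × ℕ ↦ f p.1 * g p.2]

theorem tsum_pow_mul_sum_range_le (a : ℕ → ℝ≥0∞) (r : ℝ≥0∞) :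
    ∑' n, r ^ n * ∑ k ∈ Finset.range n, a k ≤ (∑' n, r ^ n * a n) * (1 - r)⁻¹ := by
  rw [← ENNReal.tsum_geometric, tsum_mul_tsum_eq_tsum_antidiagonal]
  gcongr with n
  rw [Finset.Nat.sum_antidiagonal_eq_sum_range_succ fun i j ↦ r ^ i * a i * r ^ j,
    Finset.sum_range_succ, Finset.mul_sum]
  refine le_add_right (Finset.sum_le_sum fun k hk ↦ le_of_eq ?_)
  rw [mul_right_comm, ← pow_add, Nat.add_sub_cancel' (Finset.mem_range.1 hk).le]

theorem tsum_inv_pow_mul_eq_top {s : ℝ≥0∞} (hs : 1 < s) (hs_top : s ≠ ∞)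
    {a d : ℕ → ℝ≥0∞} (hd : ∀ n, s ^ n ≤ 2 * d n + 1) (hda : ∀ n, d n ≤ ∑ k ∈ Finset.range n, a k) :
    ∑' n, s⁻¹ ^ n * a n = ∞ := by
  have hs0 : s ≠ 0 := (zero_lt_one.trans hs).ne'
  have hinv : (1 - s⁻¹)⁻¹ ≠ ∞ :=
    ENNReal.inv_ne_top.2 (tsub_pos_of_lt (ENNReal.inv_lt_one.2 hs)).ne'
  have hterm : ∀ n, 1 ≤ 2 * (s⁻¹ ^ n * d n) + s⁻¹ ^ n := fun n ↦
    calc 1 = s⁻¹ ^ n * s ^ n := by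
          rw [← mul_pow, ENNReal.inv_mul_cancel hs0 hs_top, one_pow]
      _ ≤ s⁻¹ ^ n * (2 * d n + 1) := by gcongr; exact hd n
      _ = 2 * (s⁻¹ ^ n * d n) + s⁻¹ ^ n := by ring
  by_contra hfin
  have htop : ∞ ≤ 2 * ((∑' n, s⁻¹ ^ n * a n) * (1 - s⁻¹)⁻¹) + (1 - s⁻¹)⁻¹ :=
    calc ∞ = ∑' _n : ℕ, (1 : ℝ≥0∞) := (ENNReal.tsum_const_eq_top_of_ne_zero one_ne_zero).symm
      _ ≤ ∑' n, (2 * (s⁻¹ ^ n * d n) + s⁻¹ ^ n) := by gcongr with n; exact hterm n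
      _ = 2 * ∑' n, s⁻¹ ^ n * d n + (1 - s⁻¹)⁻¹ := by
          rw [ENNReal.tsum_add, ENNReal.tsum_mul_left, ENNReal.tsum_geometric]
      _ ≤ 2 * ((∑' n, s⁻¹ ^ n * a n) * (1 - s⁻¹)⁻¹) + (1 - s⁻¹)⁻¹ := by
          gcongr
          refine le_trans ?_ (tsum_pow_mul_sum_range_le a s⁻¹)
          gcongr with n
          exact hda n
  exact ENNReal.add_ne_top.2 ⟨ENNReal.mul_ne_top ENNReal.ofNat_ne_top
    (ENNReal.mul_ne_top hfin hinv), hinv⟩ (top_le_iff.1 htop)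

theorem tendsto_tsum_pow_mul_nhds_top {b : ℕ → ℝ≥0∞} (hb : ∀ n, b n ≠ ∞) {r : ℝ≥0∞}
    (hr : ∑' n, r ^ n * b n = ∞) : Tendsto (fun t ↦ ∑' n, t ^ n * b n) (𝓝 r) (𝓝 ∞) := by
  have hlsc : LowerSemicontinuous fun t : ℝ≥0∞ ↦ ∑' n, t ^ n * b n :=
    lowerSemicontinuous_tsum fun n ↦
      ((ENNReal.continuous_mul_const (hb n)).comp (ENNReal.continuous_pow n)).lowerSemicontinuous
  exact ENNReal.tendsto_nhds_top_iff_nnreal.2 fun x ↦ hlsc r x (by simp [hr])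

theorem two_pow_le_encard_preimage_iterate {α : Type*} {g : α → α} {I U V : Set α} (hU : U ⊆ I)
    (hV : V ⊆ I) (hUV : Disjoint U V) (hgU : I ⊆ g '' U) (hgV : I ⊆ g '' V) {y : α} (hy : y ∈ I)
    (k : ℕ) : 2 ^ k ≤ (I ∩ g^[k] ⁻¹' {y}).encard := by
  induction k with
  | zero => simp [inter_eq_right.2 (singleton_subset_iff.2 hy)]
  | succ k ih =>
    set T := I ∩ g^[k] ⁻¹' {y}
    have hle : ∀ W : Set α, I ⊆ g '' W → T.encard ≤ (W ∩ g ⁻¹' T).encard := fun W hW ↦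
      calc T.encard = (g '' (W ∩ g ⁻¹' T)).encard := by
            rw [image_inter_preimage, inter_eq_right.2 (inter_subset_left.trans hW)]
        _ ≤ (W ∩ g ⁻¹' T).encard := encard_image_le _ _
    have hsub : U ∩ g ⁻¹' T ∪ V ∩ g ⁻¹' T ⊆ I ∩ g^[k + 1] ⁻¹' {y} :=
      union_subset (fun x hx ↦ ⟨hU hx.1, hx.2.2⟩) fun x hx ↦ ⟨hV hx.1, hx.2.2⟩
    calc 2 ^ (k + 1) ≤ T.encard + T.encard := by rw [pow_succ, mul_two]; gcongr
      _ ≤ (U ∩ g ⁻¹' T).encard + (V ∩ g ⁻¹' T).encard := add_le_add (hle U hgU) (hle V hgV)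
      _ = (U ∩ g ⁻¹' T ∪ V ∩ g ⁻¹' T).encard :=
          (encard_union_eq (hUV.mono inter_subset_left inter_subset_left)).symm
      _ ≤ (I ∩ g^[k + 1] ⁻¹' {y}).encard := encard_le_encard hsub

end Growth

/-! ### A finitely additive set function with constant Jacobian -/

section Content

/-- `f` multiplies by `c` the value of the set function `m` on the members of `𝒜` where `f` is
injective. For a measure `m` and the Borel sets `𝒜`, this says that `m` has constant Jacobian `c`;
other families `𝒜` occur on the way to such a measure. -/
def HasConstJacobian {α : Type*} (f : α → α) (m : Set α → ℝ≥0∞) (c : ℝ≥0∞) (𝒜 : Set (Set α)) :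
    Prop :=
  ∀ A ∈ 𝒜, InjOn f A → m (f '' A) = c * m A

theorem HasConstJacobian.iterate {α : Type*} {f : α → α} {m : Set α → ℝ≥0∞} {c : ℝ≥0∞}
    {𝒜 : Set (Set α)} (h : HasConstJacobian f m c 𝒜) (h𝒜 : ∀ A ∈ 𝒜, InjOn f A → f '' A ∈ 𝒜)
    (n : ℕ) : HasConstJacobian f^[n] m (c ^ n) 𝒜 := by
  induction n with
  | zero => simp [HasConstJacobian]
  | succ n ih =>
    intro A hA hinj
    rw [Function.iterate_succ] at hinj ⊢
    have hinjA : InjOn f A := hinj.of_comp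
    rw [image_comp, ih _ (h𝒜 A hA hinjA) hinj.image_of_comp, h A hA hinjA, pow_succ, mul_assoc]

theorem isSetRing_univ {α : Type*} : IsSetRing (univ : Set (Set α)) :=
  ⟨mem_univ _, fun _ _ _ _ ↦ mem_univ _, fun _ _ _ _ ↦ mem_univ _⟩

theorem exists_addContent_tendsto {α ι : Type*} {𝒞 : Set (Set α)} (𝒰 : Ultrafilter ι)
    (m : ι → AddContent ℝ≥0∞ 𝒞) :
    ∃ Λ : AddContent ℝ≥0∞ 𝒞, ∀ A, Tendsto (fun i ↦ m i A) 𝒰 (𝓝 (Λ A)) := by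
  have hlim : ∀ A, ∃ l, Tendsto (fun i ↦ m i A) 𝒰 (𝓝 l) := fun A ↦
    ⟨_, (𝒰.map fun i ↦ m i A).le_nhds_lim⟩
  choose Λ hΛ using hlim
  refine ⟨⟨Λ, tendsto_nhds_unique (hΛ ∅) ?_, fun I hI hdisj hmem ↦
    tendsto_nhds_unique (hΛ _) ?_⟩, hΛ⟩
  · simpa only [addContent_empty] using tendsto_const_nhds
  · simpa only [addContent_sUnion hI hdisj hmem] using tendsto_finsetSum I fun A _ ↦ hΛ A

variable {α : Type*} {f : α → α} {I C : Set α}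

/-- The content `∑ n, w n • (counting measure on I ∩ f^{-n}(C))`. -/
def visitContent (f : α → α) (I C : Set α) (w : ℕ → ℝ≥0∞) :
    AddContent ℝ≥0∞ (univ : Set (Set α)) :=
  isSetRing_univ.addContent_of_union
    (fun A ↦ ∑' n, w n * ((A ∩ (I ∩ f^[n] ⁻¹' C)).encard : ℝ≥0∞)) (by simp) fun {A B} _ _ hAB ↦ by
      simp_rw [union_inter_distrib_right, encard_union_eq
        (hAB.mono inter_subset_left inter_subset_left), ENat.toENNReal_add, mul_add,
        ENNReal.tsum_add]

theorem visitContent_apply (f : α → α) (I C : Set α) (w : ℕ → ℝ≥0∞) (A : Set α) :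
    visitContent f I C w A = ∑' n, w n * ((A ∩ (I ∩ f^[n] ⁻¹' C)).encard : ℝ≥0∞) :=
  rfl

theorem visitContent_self (f : α → α) (I C : Set α) (w : ℕ → ℝ≥0∞) :
    visitContent f I C w I = ∑' n, w n * ((I ∩ f^[n] ⁻¹' C).encard : ℝ≥0∞) := by
  simp_rw [visitContent_apply, inter_eq_right.2 inter_subset_left]

theorem visitContent_compl (f : α → α) (I C : Set α) (w : ℕ → ℝ≥0∞) :
    visitContent f I C w Iᶜ = 0 := by
  simp [visitContent_apply, ← inter_assoc]

theorem image_inter_preimage_iterate (hmaps : MapsTo f I I) (C : Set α) {A : Set α} (hA : A ⊆ I)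
    (n : ℕ) : f '' A ∩ (I ∩ f^[n] ⁻¹' C) = f '' (A ∩ (I ∩ f^[n + 1] ⁻¹' C)) := by
  ext y
  constructor
  · rintro ⟨⟨x, hx, rfl⟩, -, hxC⟩
    exact ⟨x, ⟨hx, hA hx, hxC⟩, rfl⟩
  · rintro ⟨x, ⟨hx, -, hxC⟩, rfl⟩
    exact ⟨mem_image_of_mem f hx, hmaps (hA hx), hxC⟩

theorem visitContent_eq_add_image (hmaps : MapsTo f I I) (C : Set α) (w : ℕ → ℝ≥0∞) {A : Set α}
    (hA : A ⊆ I) (hinj : InjOn f A) :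
    visitContent f I C w A =
      w 0 * ((A ∩ C).encard : ℝ≥0∞) + visitContent f I C (fun n ↦ w (n + 1)) (f '' A) := by
  simp_rw [visitContent_apply, image_inter_preimage_iterate hmaps C hA,
    (hinj.mono inter_subset_left).encard_image]
  rw [tsum_eq_zero_add' ENNReal.summable, Function.iterate_zero, preimage_id, ← inter_assoc,
    inter_eq_left.2 hA]

theorem hasConstJacobian_of_tendsto_visitContent (hmaps : MapsTo f I I) (hC : C.Finite)
    {ι : Type*} {l : Filter ι} [l.NeBot] {r t : ι → ℝ≥0∞} {c : ℝ≥0∞} (hc : c ≠ 0) (hc_top : c ≠ ∞)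
    (hr : Tendsto r l (𝓝 0)) (ht : Tendsto t l (𝓝 c⁻¹)) {Λ : Set α → ℝ≥0∞}
    (hΛ : ∀ A, Tendsto (fun i ↦ visitContent f I C (fun n ↦ r i * t i ^ n) A) l (𝓝 (Λ A))) :
    HasConstJacobian f Λ c (𝒫 I) := by
  intro A hA hinj
  have hshift : ∀ i, visitContent f I C (fun n ↦ r i * t i ^ n) A = r i * ((A ∩ C).encard : ℝ≥0∞) +
      t i * visitContent f I C (fun n ↦ r i * t i ^ n) (f '' A) := fun i ↦ by
    rw [visitContent_eq_add_image hmaps C _ hA hinj, pow_zero, mul_one]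
    simp_rw [visitContent_apply, ← ENNReal.tsum_mul_left, pow_succ', mul_assoc,
      mul_left_comm (r i)]
  have hencard : ((A ∩ C).encard : ℝ≥0∞) ≠ ∞ := by
    simpa using hC.inter_of_right A
  have hlim : Tendsto (fun i ↦ visitContent f I C (fun n ↦ r i * t i ^ n) A) l
      (𝓝 (0 * ((A ∩ C).encard : ℝ≥0∞) + c⁻¹ * Λ (f '' A))) := by
    simp_rw [hshift]
    exact (ENNReal.Tendsto.mul_const hr (.inr hencard)).add
      (ENNReal.Tendsto.mul ht (.inl (ENNReal.inv_ne_zero.2 hc_top)) (hΛ (f '' A))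
        (.inr (ENNReal.inv_ne_top.2 hc)))
  have hΛA := tendsto_nhds_unique (hΛ A) hlim
  rw [zero_mul, zero_add] at hΛA
  rw [hΛA, ENNReal.mul_inv_cancel_left hc hc_top]

namespace PiecewiseInjOn

variable [ConditionallyCompleteLinearOrder α] [TopologicalSpace α] [OrderTopology α]
  [DenselyOrdered α] {s : ℝ≥0∞}

theorem tsum_encard_preimage_ne_top (hC : PiecewiseInjOn f I C) (hf : ContinuousOn f I)
    (hmaps : MapsTo f I I) (hI : I.OrdConnected) (hfin : C.Finite)
    (hs : IsGrowthRate (fun n ↦ lapBound f I C n) s) {t : ℝ≥0∞} (ht : t < s⁻¹) :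
    ∑' n, t ^ n * ((I ∩ f^[n] ⁻¹' C).encard : ℝ≥0∞) ≠ ∞ := by
  have hle : ∑' n, t ^ n * ((I ∩ f^[n] ⁻¹' C).encard : ℝ≥0∞) ≤
      (∑' n, t ^ n * (lapBound f I C n : ℝ≥0∞)) * (C.encard : ℝ≥0∞) := by
    simp_rw [← ENNReal.tsum_mul_right, mul_assoc]
    gcongr
    exact_mod_cast ENat.toENNReal_mono
      (hC.encard_preimage_iterate_le hf hmaps hI hfin n hfin)
  exact ne_top_of_le_ne_top (ENNReal.mul_ne_top
    (hs.tsum_pow_mul_ne_top (fun n ↦ ENNReal.natCast_ne_top _) ht) (by simpa using hfin)) hle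

theorem tendsto_tsum_encard_preimage (hC : PiecewiseInjOn f I C) (hf : ContinuousOn f I)
    (hmaps : MapsTo f I I) (hI : I.OrdConnected) (hfin : C.Finite)
    (hs : IsGrowthRate (fun n ↦ lapBound f I C n) s) (hs_one : 1 < s) :
    Tendsto (fun t ↦ ∑' n, t ^ n * ((I ∩ f^[n] ⁻¹' C).encard : ℝ≥0∞)) (𝓝 s⁻¹) (𝓝 ∞) := by
  have hs_top : s ≠ ∞ := hs.ne_top (ENNReal.natCast_ne_top _)
  refine tendsto_tsum_pow_mul_nhds_top (fun n ↦ ?_) (tsum_inv_pow_mul_eq_top hs_one hs_top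
    (d := fun n ↦ (visitSet f I C n).ncard) (fun n ↦ ?_) fun n ↦ ?_)
  · have hle := ENat.toENNReal_mono (hC.encard_preimage_iterate_le hf hmaps hI hfin n hfin)
    rw [ENat.toENNReal_mul] at hle
    exact ne_top_of_le_ne_top (ENNReal.mul_ne_top (by simp) (by simpa using hfin)) hle
  · simpa [lapBound] using hs.pow_le n
  · calc ((visitSet f I C n).ncard : ℝ≥0∞) = ((visitSet f I C n).encard : ℝ≥0∞) := by
          rw [← (hC.finite_visitSet hf hmaps hI hfin n).cast_ncard_eq, ENat.toENNReal_coe]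
      _ ≤ ((∑ k ∈ Finset.range n, (I ∩ f^[k] ⁻¹' C).encard : ℕ∞) : ℝ≥0∞) :=
          ENat.toENNReal_mono (encard_visitSet_le_sum hmaps C n)
      _ = ∑ k ∈ Finset.range n, ((I ∩ f^[k] ⁻¹' C).encard : ℝ≥0∞) :=
          map_sum ENat.toENNRealRingHom _ _

theorem exists_addContent_hasConstJacobian (hC : PiecewiseInjOn f I C) (hf : ContinuousOn f I)
    (hmaps : MapsTo f I I) (hI : I.OrdConnected) (hfin : C.Finite)
    (hs : IsGrowthRate (fun n ↦ lapBound f I C n) s) (hs_one : 1 < s) :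
    ∃ Λ : AddContent ℝ≥0∞ (univ : Set (Set α)),
      Λ I = 1 ∧ Λ Iᶜ = 0 ∧ HasConstJacobian f Λ s (𝒫 I) := by
  have hs0 : s ≠ 0 := (zero_lt_one.trans hs_one).ne'
  have hs_top : s ≠ ∞ := hs.ne_top (ENNReal.natCast_ne_top _)
  have : (𝓝[<] s⁻¹).NeBot := nhdsLT_neBot_of_exists_lt ⟨0, ENNReal.inv_pos.2 hs_top⟩
  set 𝒰 : Ultrafilter ℝ≥0∞ := Ultrafilter.of (𝓝[<] s⁻¹)
  have h𝒰 : (𝒰 : Filter ℝ≥0∞) ≤ 𝓝 s⁻¹ := (Ultrafilter.of_le _).trans nhdsWithin_le_nhds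
  set S : ℝ≥0∞ → ℝ≥0∞ := fun t ↦ ∑' n, t ^ n * ((I ∩ f^[n] ⁻¹' C).encard : ℝ≥0∞)
  have hS_top : Tendsto S 𝒰 (𝓝 ∞) :=
    (hC.tendsto_tsum_encard_preimage hf hmaps hI hfin hs hs_one).mono_left h𝒰
  obtain ⟨Λ, hΛ⟩ := exists_addContent_tendsto 𝒰
    fun t ↦ visitContent f I C fun n ↦ (S t)⁻¹ * t ^ n
  refine ⟨Λ, tendsto_nhds_unique (hΛ I) (tendsto_const_nhds.congr' ?_), ?_,
    hasConstJacobian_of_tendsto_visitContent hmaps hfin hs0 hs_top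
      (by simpa using hS_top.inv) h𝒰 hΛ⟩
  · filter_upwards [Ultrafilter.of_le _ self_mem_nhdsWithin,
      hS_top.eventually_ne ENNReal.top_ne_zero] with t ht hSt
    simp_rw [visitContent_self, mul_assoc, ENNReal.tsum_mul_left]
    exact (ENNReal.inv_mul_cancel hSt
      (hC.tsum_encard_preimage_ne_top hf hmaps hI hfin hs ht)).symm
  · exact tendsto_nhds_unique (hΛ Iᶜ) (by simp [visitContent_compl])

end PiecewiseInjOn

end Content

/-! ### Diffuseness and support of the set function -/

section Diffuse

variable {α : Type*} {Λ : AddContent ℝ≥0∞ (univ : Set (Set α))} {f : α → α} {I : Set α} {c : ℝ≥0∞}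

theorem monotone_addContent_univ (Λ : AddContent ℝ≥0∞ (univ : Set (Set α))) : Monotone Λ :=
  fun _ _ hAB ↦ addContent_mono isSetRing_univ.isSetSemiring (mem_univ _) (mem_univ _) hAB

theorem addContent_univ_union_le (Λ : AddContent ℝ≥0∞ (univ : Set (Set α))) (A B : Set α) :
    Λ (A ∪ B) ≤ Λ A + Λ B :=
  addContent_union_le isSetRing_univ (mem_univ _) (mem_univ _)

theorem addContent_inter_eq_of_compl_eq_zero (hΛ : Λ Iᶜ = 0) (A : Set α) : Λ (A ∩ I) = Λ A := by
  refine (monotone_addContent_univ Λ inter_subset_left).antisymm ?_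
  calc Λ A ≤ Λ (A ∩ I ∪ Iᶜ) := monotone_addContent_univ Λ
        fun x hx ↦ (em (x ∈ I)).imp_left fun hxI ↦ ⟨hx, hxI⟩
    _ ≤ Λ (A ∩ I) + Λ Iᶜ := addContent_univ_union_le Λ _ _
    _ = Λ (A ∩ I) := by rw [hΛ, add_zero]

theorem addContent_le_of_compl_eq_zero (hΛ : Λ Iᶜ = 0) (A : Set α) : Λ A ≤ Λ I := by
  rw [← addContent_inter_eq_of_compl_eq_zero hΛ A]
  exact monotone_addContent_univ Λ inter_subset_right

namespace HasConstJacobian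

theorem iterate_powerset (h : HasConstJacobian f Λ c (𝒫 I)) (hmaps : MapsTo f I I) (n : ℕ) :
    HasConstJacobian f^[n] Λ (c ^ n) (𝒫 I) :=
  h.iterate (fun _ hA _ ↦ (image_mono hA).trans hmaps.image_subset) n

theorem map_image_le {ι : Type*} [Finite ι] {J : ι → Set α} (h : HasConstJacobian f Λ c (𝒫 I))
    (hJ : ⋃ i, J i = I) (hdisj : Pairwise (Function.onFun Disjoint J)) (hinj : ∀ i, InjOn f (J i))
    {A : Set α} (hA : A ⊆ I) : Λ (f '' A) ≤ c * Λ A := by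
  have := Fintype.ofFinite ι
  have hcover : A = ⋃ i ∈ (Finset.univ : Finset ι), A ∩ J i := by
    simp [← inter_iUnion, hJ, inter_eq_left.2 hA]
  calc Λ (f '' A) = Λ (⋃ i ∈ (Finset.univ : Finset ι), f '' (A ∩ J i)) := by
        rw [← image_iUnion₂, ← hcover]
    _ ≤ ∑ i, Λ (f '' (A ∩ J i)) := addContent_biUnion_le isSetRing_univ fun _ _ ↦ mem_univ _
    _ = ∑ i, c * Λ (A ∩ J i) := Finset.sum_congr rfl fun i _ ↦
        h _ (inter_subset_left.trans hA) ((hinj i).mono inter_subset_right)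
    _ = c * Λ (⋃ i ∈ (Finset.univ : Finset ι), A ∩ J i) := by
        rw [← Finset.mul_sum, addContent_biUnion (f := fun i ↦ A ∩ J i) (fun _ _ ↦ mem_univ _)
          (fun i _ j _ hij ↦ (hdisj hij).mono inter_subset_right inter_subset_right) (mem_univ _)]
    _ = c * Λ A := by rw [← hcover]

theorem map_image_iterate_le {ι : Type*} [Finite ι] {J : ι → Set α}
    (h : HasConstJacobian f Λ c (𝒫 I)) (hmaps : MapsTo f I I) (hJ : ⋃ i, J i = I)
    (hdisj : Pairwise (Function.onFun Disjoint J)) (hinj : ∀ i, InjOn f (J i))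
    {A : Set α} (hA : A ⊆ I) (n : ℕ) : Λ (f^[n] '' A) ≤ c ^ n * Λ A := by
  induction n with
  | zero => simp
  | succ n ih =>
    rw [Function.iterate_succ', image_comp, pow_succ', mul_assoc]
    exact (h.map_image_le hJ hdisj hinj
      ((image_mono hA).trans (hmaps.iterate n).image_subset)).trans (by gcongr)

variable [LinearOrder α] {D : Set α}

theorem le_three_mul_image (h : HasConstJacobian f Λ c (𝒫 I)) (hc : c ≠ 0) (hc_top : c ≠ ∞)
    (hf : PiecewiseInjOn f I D) (hI : I.OrdConnected) {K : Set α} (hK : K.OrdConnected) {p : α}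
    (hKD : K ∩ D ⊆ {p}) {A : Set α} (hAI : A ⊆ I) (hAK : A ⊆ K) :
    Λ A ≤ 3 * (c⁻¹ * Λ (f '' A)) := by
  have hpart : ∀ B : Set α, InjOn f (A ∩ B) → Λ (A ∩ B) ≤ c⁻¹ * Λ (f '' A) := fun B hinj ↦
    calc Λ (A ∩ B) = c⁻¹ * Λ (f '' (A ∩ B)) := by
          rw [h _ (inter_subset_left.trans hAI) hinj, ENNReal.inv_mul_cancel_left hc hc_top]
      _ ≤ c⁻¹ * Λ (f '' A) := by
          gcongr
          exact monotone_addContent_univ Λ (image_mono inter_subset_left)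
  have hside : ∀ B : Set α, B.OrdConnected → p ∉ B → InjOn f (A ∩ B) := fun B hB hp ↦
    (hf (K := I ∩ K ∩ B) (inter_subset_left.trans inter_subset_left) ((hI.inter hK).inter hB)
      (disjoint_left.2 fun x hx hxD ↦ hp (hKD ⟨hx.1.2, hxD⟩ ▸ hx.2))).mono
      (inter_subset_inter_left B (subset_inter hAI hAK))
  have hcover : A = A ∩ Iio p ∪ A ∩ {p} ∪ A ∩ Ioi p := by
    rw [← inter_union_distrib_left, ← inter_union_distrib_left, union_singleton, Iio_insert,
      Iic_union_Ioi, inter_univ]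
  calc Λ A = Λ (A ∩ Iio p ∪ A ∩ {p} ∪ A ∩ Ioi p) := by rw [← hcover]
    _ ≤ Λ (A ∩ Iio p) + Λ (A ∩ {p}) + Λ (A ∩ Ioi p) :=
        (addContent_univ_union_le Λ _ _).trans (by gcongr; exact addContent_univ_union_le Λ _ _)
    _ ≤ c⁻¹ * Λ (f '' A) + c⁻¹ * Λ (f '' A) + c⁻¹ * Λ (f '' A) :=
        add_le_add (add_le_add (hpart _ (hside _ ordConnected_Iio self_notMem_Iio))
          (hpart _ ((subsingleton_singleton.anti inter_subset_right).injOn f)))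
          (hpart _ (hside _ ordConnected_Ioi self_notMem_Ioi))
    _ = 3 * (c⁻¹ * Λ (f '' A)) := by ring

end HasConstJacobian

theorem exists_ordConnected_mem_nhds_inter_subset [LinearOrder α] [TopologicalSpace α]
    [OrderTopology α] {D : Set α} (hD : D.Finite) (p : α) :
    ∃ K ∈ 𝓝 p, K.OrdConnected ∧ K ∩ D ⊆ {p} := by
  have hmem : (D \ {p})ᶜ ∈ 𝓝 p := (hD.subset sdiff_subset).isClosed.compl_mem_nhds (by simp)
  refine ⟨_, ordConnectedComponent_mem_nhds.2 hmem, inferInstance, fun x hx ↦ ?_⟩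
  by_contra hxp
  exact ordConnectedComponent_subset hx.1 ⟨hx.2, hxp⟩

namespace PiecewiseInjOn

variable [ConditionallyCompleteLinearOrder α] [TopologicalSpace α] [OrderTopology α]
  [DenselyOrdered α] {C : Set α} {s : ℝ≥0∞}

theorem tendsto_addContent_smallSets (hC : PiecewiseInjOn f I C) (hf : ContinuousOn f I)
    (hmaps : MapsTo f I I) (hI : I.OrdConnected) (hfin : C.Finite) (hs : 1 < s) (hs_top : s ≠ ∞)
    (hΛ : Λ I ≠ ∞) (hΛc : Λ Iᶜ = 0) (h : HasConstJacobian f Λ s (𝒫 I)) (x : α) :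
    Tendsto Λ (𝓝 x).smallSets (𝓝 0) := by
  have hs0 : s ≠ 0 := (zero_lt_one.trans hs).ne'
  have hpow : Tendsto (fun n : ℕ ↦ 3 * (s⁻¹ ^ n * Λ I)) atTop (𝓝 0) := by
    simpa using ENNReal.Tendsto.const_mul (ENNReal.Tendsto.mul_const
      (ENNReal.tendsto_pow_atTop_nhds_zero_of_lt_one (ENNReal.inv_lt_one.2 hs)) (.inr hΛ))
      (.inr (ENNReal.ofNat_ne_top (n := 3)))
  refine ENNReal.tendsto_nhds_zero.2 fun ε hε ↦ ?_
  obtain ⟨n, hn⟩ := (hpow.eventually_le_const hε).exists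
  obtain ⟨K, hKx, hK, hKD⟩ := exists_ordConnected_mem_nhds_inter_subset
    (hC.finite_visitSet hf hmaps hI hfin n) x
  filter_upwards [eventually_smallSets.2 ⟨K, hKx, fun _ hA ↦ hA⟩] with A hAK
  calc Λ A = Λ (A ∩ I) := (addContent_inter_eq_of_compl_eq_zero hΛc A).symm
    _ ≤ 3 * ((s ^ n)⁻¹ * Λ (f^[n] '' (A ∩ I))) :=
        (h.iterate_powerset hmaps n).le_three_mul_image (pow_ne_zero n hs0)
          (ENNReal.pow_ne_top hs_top) (hC.iterate hf hmaps n) hI hK hKD inter_subset_right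
          (inter_subset_left.trans hAK)
    _ ≤ 3 * (s⁻¹ ^ n * Λ I) := by
        rw [ENNReal.inv_pow]
        gcongr
        exact addContent_le_of_compl_eq_zero hΛc _
    _ ≤ ε := hn

end PiecewiseInjOn

end Diffuse

section TopExact

variable {f : ℝ → ℝ} {C : Set ℝ} {s : ℝ≥0∞}

theorem TopExact.image_unitI (hex : TopExact f) (hmaps : MapsTo f unitI unitI) :
    f '' unitI = unitI := by
  obtain ⟨n, hn, himage⟩ :=
    hex unitI ⟨0, unitInterval.zero_mem⟩ subset_rfl ⟨univ, isOpen_univ, (univ_inter _).symm⟩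
  refine hmaps.image_subset.antisymm ?_
  calc unitI = f '' (f^[n - 1] '' unitI) := by
        rw [← image_comp, ← Function.iterate_succ', Nat.succ_eq_add_one, Nat.sub_add_cancel hn,
          himage]
    _ ⊆ f '' unitI := image_mono (hmaps.iterate (n - 1)).image_subset

theorem TopExact.eventually_image_Ioo (hex : TopExact f) (hmaps : MapsTo f unitI unitI) {a b : ℝ}
    (ha : 0 ≤ a) (hab : a < b) (hb : b ≤ 1) : ∀ᶠ n in atTop, f^[n] '' Ioo a b = unitI := by
  have hsub : Ioo a b ⊆ unitI := Ioo_subset_Icc_self.trans (Icc_subset_Icc ha hb)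
  obtain ⟨n, -, himage⟩ := hex (Ioo a b) (nonempty_Ioo.2 hab) hsub
    ⟨Ioo a b, isOpen_Ioo, (inter_eq_left.2 hsub).symm⟩
  refine eventually_atTop.2 ⟨n, fun k hk ↦ ?_⟩
  induction k, hk using Nat.le_induction with
  | base => exact himage
  | succ k _ ih => rw [Function.iterate_succ', image_comp, ih, hex.image_unitI hmaps]

-- Some iterate `f^[N]` stretches each half of the unit interval over the whole of it.
theorem TopExact.exists_two_pow_le_lapBound (hex : TopExact f) (hC : PiecewiseInjOn f unitI C)
    (hf : ContinuousOn f unitI) (hmaps : MapsTo f unitI unitI) (hfin : C.Finite) :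
    ∃ N ≠ 0, ∀ k, 2 ^ k ≤ lapBound f unitI C (N * k) := by
  obtain ⟨N, hN_left, hN_right, hN⟩ :=
    ((hex.eventually_image_Ioo hmaps le_rfl (b := 1 / 2) (by norm_num) (by norm_num)).and
      ((hex.eventually_image_Ioo hmaps (a := 1 / 2) (by norm_num) (by norm_num) le_rfl).and
        (eventually_ne_atTop 0))).exists
  refine ⟨N, hN, fun k ↦ ?_⟩
  have hdisj : Disjoint (Ioo (0 : ℝ) (1 / 2)) (Ioo (1 / 2) 1) :=
    disjoint_left.2 fun x hx hx' ↦ hx.2.not_gt hx'.1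
  have hhorseshoe : 2 ^ k ≤ (unitI ∩ f^[N * k] ⁻¹' {0}).encard := by
    rw [Function.iterate_mul]
    exact two_pow_le_encard_preimage_iterate
      (Ioo_subset_Icc_self.trans (Icc_subset_Icc_right (by norm_num)))
      (Ioo_subset_Icc_self.trans (Icc_subset_Icc_left (by norm_num)))
      hdisj hN_left.ge hN_right.ge unitInterval.zero_mem k
  have hfiber := hC.encard_preimage_iterate_le hf hmaps ordConnected_Icc hfin (N * k)
    (finite_singleton 0)
  rw [encard_singleton, mul_one] at hfiber
  exact_mod_cast hhorseshoe.trans hfiber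

theorem TopExact.one_lt_growthRate (hex : TopExact f) (hC : PiecewiseInjOn f unitI C)
    (hf : ContinuousOn f unitI) (hmaps : MapsTo f unitI unitI) (hfin : C.Finite)
    (hs : IsGrowthRate (fun n ↦ lapBound f unitI C n) s) : 1 < s := by
  obtain ⟨N, hN, hpow⟩ := hex.exists_two_pow_le_lapBound hC hf hmaps hfin
  have htwo : 2 ≤ s ^ N := hs.le_pow_of_pow_le hN fun k ↦ mod_cast hpow k
  exact (one_lt_pow_iff hN).1 (ENNReal.one_lt_two.trans_le htwo)

theorem TopExact.addContent_Ioo_pos {Λ : AddContent ℝ≥0∞ (univ : Set (Set ℝ))} {ι : Type*}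
    [Finite ι] {J : ι → Set ℝ} (hex : TopExact f) (hmaps : MapsTo f unitI unitI)
    (hΛ : Λ unitI ≠ 0) (h : HasConstJacobian f Λ s (𝒫 unitI)) (hJ : ⋃ i, J i = unitI)
    (hdisj : Pairwise (Function.onFun Disjoint J)) (hinj : ∀ i, InjOn f (J i)) {a b : ℝ}
    (ha : 0 ≤ a) (hab : a < b) (hb : b ≤ 1) : 0 < Λ (Ioo a b) := by
  obtain ⟨n, hn⟩ := (hex.eventually_image_Ioo hmaps ha hab hb).exists
  have hle : Λ unitI ≤ s ^ n * Λ (Ioo a b) := hn ▸ h.map_image_iterate_le hmaps hJ hdisj hinj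
    (Ioo_subset_Icc_self.trans (Icc_subset_Icc ha hb)) n
  exact pos_iff_ne_zero.2 (right_ne_zero_of_mul (ne_bot_of_le_ne_bot hΛ hle))

end TopExact

section CDF

/-- The distribution function of a content, the coordinate in which `f` is `s`-Lipschitz and whose
Stieltjes measure is the measure of maximal entropy. It is meaningful for finite contents only. -/
def contentCDF {α : Type*} [Preorder α] (Λ : Set α → ℝ≥0∞) (x : α) : ℝ := (Λ (Iic x)).toReal

variable {α : Type*} [LinearOrder α] {Λ : AddContent ℝ≥0∞ (univ : Set (Set α))}

theorem monotone_contentCDF (hΛ : ∀ A, Λ A ≠ ∞) : Monotone (contentCDF Λ) := fun _ _ hxy ↦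
  ENNReal.toReal_mono (hΛ _) (monotone_addContent_univ Λ (Iic_subset_Iic.2 hxy))

theorem contentCDF_sub_contentCDF (hΛ : ∀ A, Λ A ≠ ∞) {x y : α} (hxy : x ≤ y) :
    contentCDF Λ y - contentCDF Λ x = (Λ (Ioc x y)).toReal := by
  rw [sub_eq_iff_eq_add', contentCDF, contentCDF, ← Iic_union_Ioc_eq_Iic hxy,
    addContent_union isSetRing_univ (mem_univ _) (mem_univ _) (Iic_disjoint_Ioc le_rfl),
    ENNReal.toReal_add (hΛ _) (hΛ _)]

theorem abs_contentCDF_sub (hΛ : ∀ A, Λ A ≠ ∞) (x y : α) :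
    |contentCDF Λ x - contentCDF Λ y| = (Λ (uIoc x y)).toReal := by
  wlog hxy : x ≤ y generalizing x y
  · rw [abs_sub_comm, this y x (le_of_not_ge hxy), uIoc_comm]
  · rw [abs_sub_comm, contentCDF_sub_contentCDF hΛ hxy, uIoc_of_le hxy, ENNReal.abs_toReal]

theorem continuous_contentCDF [TopologicalSpace α] [OrderTopology α] (hΛ : ∀ A, Λ A ≠ ∞)
    (hdiffuse : ∀ x, Tendsto Λ (𝓝 x).smallSets (𝓝 0)) : Continuous (contentCDF Λ) := by
  refine continuous_iff_continuousAt.2 fun x ↦ tendsto_iff_dist_tendsto_zero.2 ?_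
  have hsmall : Tendsto (fun y ↦ Λ (uIcc y x)) (𝓝 x) (𝓝 0) :=
    (hdiffuse x).comp (tendsto_id.uIcc tendsto_const_nhds)
  refine squeeze_zero (fun _ ↦ dist_nonneg) (fun y ↦ ?_)
    ((ENNReal.tendsto_toReal ENNReal.zero_ne_top).comp hsmall)
  rw [Real.dist_eq, abs_contentCDF_sub hΛ]
  exact ENNReal.toReal_mono (hΛ _) (monotone_addContent_univ Λ uIoc_subset_uIcc)

theorem strictMonoOn_contentCDF (hΛ : ∀ A, Λ A ≠ ∞) {I : Set α}
    (hpos : ∀ x ∈ I, ∀ y ∈ I, x < y → 0 < Λ (Ioo x y)) : StrictMonoOn (contentCDF Λ) I :=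
  fun x hx y hy hxy ↦ sub_pos.1 <| by
    rw [contentCDF_sub_contentCDF hΛ hxy.le]
    exact ENNReal.toReal_pos ((hpos x hx y hy hxy).trans_le
      (monotone_addContent_univ Λ Ioo_subset_Ioc_self)).ne' (hΛ _)

end CDF

/-! ### Topological entropy -/

section Lipschitz

variable {α : Type*} {Λ : AddContent ℝ≥0∞ (univ : Set (Set α))}

theorem addContent_insert_le_of_tendsto_smallSets [TopologicalSpace α] {x : α}
    (hdiffuse : Tendsto Λ (𝓝 x).smallSets (𝓝 0)) (A : Set α) : Λ (insert x A) ≤ Λ A := by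
  have hsingleton : Λ {x} = 0 := by
    refine nonpos_iff_eq_zero.1 (le_of_forall_gt_imp_ge_of_dense fun ε hε ↦ ?_)
    obtain ⟨t, ht, hle⟩ := eventually_smallSets.1 (hdiffuse.eventually_le_const hε)
    exact hle {x} (singleton_subset_iff.2 (mem_of_mem_nhds ht))
  calc Λ (insert x A) ≤ Λ {x} + Λ A := addContent_univ_union_le Λ {x} A
    _ = Λ A := by rw [hsingleton, zero_add]

theorem HasConstJacobian.abs_contentCDF_sub_le [ConditionallyCompleteLinearOrder α]
    [TopologicalSpace α] [OrderTopology α] [DenselyOrdered α] {f : α → α} {I : Set α} {c : ℝ≥0∞}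
    {ι : Type*} [Finite ι] {J : ι → Set α} (h : HasConstJacobian f Λ c (𝒫 I)) (hc_top : c ≠ ∞)
    (hJ : ⋃ i, J i = I) (hdisj : Pairwise (Function.onFun Disjoint J)) (hinj : ∀ i, InjOn f (J i))
    (hf : ContinuousOn f I) (hI : I.OrdConnected) (hΛ : ∀ A, Λ A ≠ ∞)
    (hdiffuse : ∀ x, Tendsto Λ (𝓝 x).smallSets (𝓝 0)) {x y : α} (hx : x ∈ I) (hy : y ∈ I) :
    |contentCDF Λ (f x) - contentCDF Λ (f y)| ≤ c.toReal * |contentCDF Λ x - contentCDF Λ y| := by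
  have hxy : uIcc x y ⊆ I := hI.uIcc_subset hx hy
  rw [abs_contentCDF_sub hΛ, abs_contentCDF_sub hΛ, ← ENNReal.toReal_mul]
  refine ENNReal.toReal_mono (ENNReal.mul_ne_top hc_top (hΛ _)) ?_
  calc Λ (uIoc (f x) (f y)) ≤ Λ (f '' uIcc x y) := monotone_addContent_univ Λ
        (uIoc_subset_uIcc.trans (intermediate_value_uIcc (hf.mono hxy)))
    _ ≤ c * Λ (uIcc x y) := h.map_image_le hJ hdisj hinj hxy
    _ = c * Λ (insert (x ⊓ y) (uIoc x y)) := by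
        rw [uIoc, Ioc_insert_left inf_le_sup, uIcc]
    _ ≤ c * Λ (uIoc x y) := by
        gcongr
        exact addContent_insert_le_of_tendsto_smallSets (hdiffuse _) _

end Lipschitz

section CoverEntropy

theorem exists_pos_forall_dist_lt_mem {X Y : Type*} [UniformSpace X] [MetricSpace Y] {K : Set X}
    (hK : IsCompact K) {φ : X → Y} (hφ : ContinuousOn φ K) (hinj : InjOn φ K)
    {U : Set (X × X)} (hU : U ∈ uniformity X) :
    ∃ δ > 0, ∀ x ∈ K, ∀ y ∈ K, dist (φ x) (φ y) < δ → (x, y) ∈ U := by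
  have := isCompact_iff_compactSpace.1 hK
  let e := (hφ.domRestrict.isClosedEmbedding hinj.injective).isEmbedding.toHomeomorph
  have := e.compactSpace
  have hsymm : UniformContinuous e.symm :=
    CompactSpace.uniformContinuous_of_continuous e.symm.continuous
  obtain ⟨δ, hδ, hmem⟩ := Metric.mem_uniformity_dist.1
    (mem_map.1 ((uniformContinuous_subtype_val.comp hsymm) hU))
  refine ⟨δ, hδ, fun x hx y hy hxy ↦ ?_⟩
  simpa using hmem (a := e ⟨x, hx⟩) (b := e ⟨y, hy⟩) hxy

open Dynamics ExpGrowth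

theorem coverMincard_le_card_of_mapsTo {X ι : Type*} {T : X → X} {F : Set X} {U : SetRel X X}
    {n : ℕ} {q : X → ι} {t : Finset ι} (hq : MapsTo q F t)
    (hsame : ∀ x ∈ F, ∀ y ∈ F, q x = q y → (x, y) ∈ dynEntourage T U n) :
    coverMincard T F U n ≤ t.card := by
  classical
  rcases F.eq_empty_or_nonempty with rfl | ⟨x₀, -⟩
  · simp
  have : Nonempty X := ⟨x₀⟩
  have hcover : IsDynCoverOf T F U n (t.image (Function.invFunOn q F)) := fun x hx ↦
    ⟨Function.invFunOn q F (q x), Finset.mem_image_of_mem _ (hq hx),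
      hsame x hx _ (Function.invFunOn_mem ⟨x, hx, rfl⟩) (Function.invFunOn_eq ⟨x, hx, rfl⟩).symm⟩
  exact hcover.coverMincard_le_card.trans (mod_cast Finset.card_image_le)

theorem card_Icc_floor_le {x y : ℝ} (hxy : x ≤ y) :
    ((Finset.Icc ⌊x⌋ ⌊y⌋).card : ℝ) ≤ y - x + 2 := by
  have hfloor : ⌊x⌋ ≤ ⌊y⌋ + 1 := (Int.floor_mono hxy).trans (Int.le_add_one le_rfl)
  have hcard : ((Finset.Icc ⌊x⌋ ⌊y⌋).card : ℝ) = ⌊y⌋ + 1 - ⌊x⌋ := by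
    exact_mod_cast Int.card_Icc_of_le _ _ hfloor
  linarith [Int.floor_le y, Int.lt_floor_add_one x]

section UpperBound

variable {X : Type*} {T : X → X} {K : Set X} {φ : X → ℝ} {L : ℝ}

theorem abs_sub_iterate_le (hmaps : MapsTo T K K) (hL : 0 ≤ L)
    (hLip : ∀ x ∈ K, ∀ y ∈ K, |φ (T x) - φ (T y)| ≤ L * |φ x - φ y|) {x y : X} (hx : x ∈ K)
    (hy : y ∈ K) (n : ℕ) : |φ (T^[n] x) - φ (T^[n] y)| ≤ L ^ n * |φ x - φ y| := by
  induction n with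
  | zero => simp
  | succ n ih =>
    rw [Function.iterate_succ_apply', Function.iterate_succ_apply', pow_succ', mul_assoc]
    exact (hLip _ (hmaps.iterate n hx) _ (hmaps.iterate n hy)).trans (by gcongr)

-- Two points with the same value of `⌊φ x * (L ^ n / δ)⌋` stay `δ`-close up to time `n`.
theorem coverMincard_le_of_lipschitz (hmaps : MapsTo T K K) (hL : 1 ≤ L)
    (hLip : ∀ x ∈ K, ∀ y ∈ K, |φ (T x) - φ (T y)| ≤ L * |φ x - φ y|) {R : ℝ} (hR : 0 ≤ R)
    (hφR : ∀ x ∈ K, |φ x| ≤ R) {δ : ℝ} (hδ : 0 < δ) {U : SetRel X X}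
    (hU : ∀ x ∈ K, ∀ y ∈ K, |φ x - φ y| < δ → (x, y) ∈ U) (n : ℕ) :
    (coverMincard T K U n : ℝ≥0∞) ≤ ENNReal.ofReal (2 * R / δ + 2) * ENNReal.ofReal L ^ n := by
  have hL0 : 0 < L := zero_lt_one.trans_le hL
  set c : ℝ := L ^ n / δ with hc
  have hc0 : 0 < c := by positivity
  have hfloor : MapsTo (fun x ↦ ⌊φ x * c⌋) K (Finset.Icc ⌊-R * c⌋ ⌊R * c⌋) := fun x hx ↦ by
    obtain ⟨hlow, hhigh⟩ := abs_le.1 (hφR x hx)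
    rw [Finset.coe_Icc]
    exact ⟨Int.floor_mono (by gcongr), Int.floor_mono (by gcongr)⟩
  have hclose : ∀ x ∈ K, ∀ y ∈ K, ⌊φ x * c⌋ = ⌊φ y * c⌋ → (x, y) ∈ dynEntourage T U n := by
    refine fun x hx y hy hxy ↦ mem_dynEntourage.2 fun k hk ↦
      hU _ (hmaps.iterate k hx) _ (hmaps.iterate k hy) ?_
    have hlt : |φ x - φ y| * c < 1 := by
      rw [← abs_of_pos hc0, ← abs_mul, sub_mul]
      exact Int.abs_sub_lt_one_of_floor_eq_floor hxy
    calc |φ (T^[k] x) - φ (T^[k] y)| ≤ L ^ k * |φ x - φ y| :=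
          abs_sub_iterate_le hmaps hL0.le hLip hx hy k
      _ ≤ L ^ n * |φ x - φ y| := by gcongr
      _ = δ * (|φ x - φ y| * c) := by rw [hc]; field_simp
      _ < δ := mul_lt_of_lt_one_right hδ hlt
  have hcard : ((Finset.Icc ⌊-R * c⌋ ⌊R * c⌋).card : ℝ) ≤ (2 * R / δ + 2) * L ^ n :=
    calc ((Finset.Icc ⌊-R * c⌋ ⌊R * c⌋).card : ℝ) ≤ R * c - -R * c + 2 :=
          card_Icc_floor_le (by gcongr; linarith)
      _ ≤ R * c - -R * c + 2 * L ^ n := by gcongr; linarith [one_le_pow₀ hL (n := n)]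
      _ = (2 * R / δ + 2) * L ^ n := by rw [hc]; ring
  calc (coverMincard T K U n : ℝ≥0∞) ≤ ((Finset.Icc ⌊-R * c⌋ ⌊R * c⌋).card : ℝ≥0∞) :=
        mod_cast ENat.toENNReal_mono (coverMincard_le_card_of_mapsTo hfloor hclose)
    _ ≤ ENNReal.ofReal ((2 * R / δ + 2) * L ^ n) := by
        rw [← ENNReal.ofReal_natCast]
        exact ENNReal.ofReal_le_ofReal hcard
    _ = ENNReal.ofReal (2 * R / δ + 2) * ENNReal.ofReal L ^ n := by
        rw [ENNReal.ofReal_mul (by positivity), ENNReal.ofReal_pow hL0.le]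

theorem coverEntropy_le_log_of_lipschitz [UniformSpace X] (hK : IsCompact K) (hmaps : MapsTo T K K)
    (hφ : ContinuousOn φ K) (hinj : InjOn φ K) (hL : 1 ≤ L)
    (hLip : ∀ x ∈ K, ∀ y ∈ K, |φ (T x) - φ (T y)| ≤ L * |φ x - φ y|) :
    coverEntropy T K ≤ ENNReal.log (ENNReal.ofReal L) := by
  rcases K.eq_empty_or_nonempty with rfl | ⟨x₀, hx₀⟩
  · simp
  obtain ⟨R, hR⟩ := hK.exists_bound_of_continuousOn hφ
  refine iSup₂_le fun U hU ↦ ?_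
  obtain ⟨δ, hδ, hmem⟩ := exists_pos_forall_dist_lt_mem hK hφ hinj hU
  rw [← expGrowthSup_pow]
  exact expGrowthSup_le_of_eventually_le ENNReal.ofReal_ne_top (Eventually.of_forall
    (coverMincard_le_of_lipschitz hmaps hL hLip ((norm_nonneg _).trans (hR x₀ hx₀)) hR hδ hmem))

end UpperBound

section LowerBound

theorem addContent_le_coverMincard_mul {X : Type*} {Λ : AddContent ℝ≥0∞ (univ : Set (Set X))}
    {T : X → X} {F : Set X} {U : SetRel X X} {n : ℕ} {b : ℝ≥0∞} (hb : b ≠ 0)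
    (hball : ∀ y, Λ {x ∈ F | (x, y) ∈ dynEntourage T U n} ≤ b) :
    Λ F ≤ coverMincard T F U n * b := by
  rcases eq_top_or_lt_top (coverMincard T F U n) with htop | hlt
  · simp [htop, hb]
  obtain ⟨t, ht, hcard⟩ := (coverMincard_finite_iff T F U n).1 hlt
  have hcover : F ⊆ ⋃ y ∈ t, {x ∈ F | (x, y) ∈ dynEntourage T U n} := fun x hx ↦ by
    obtain ⟨y, hy, hxy⟩ := ht hx
    exact mem_iUnion₂.2 ⟨y, hy, hx, hxy⟩
  calc Λ F ≤ Λ (⋃ y ∈ t, {x ∈ F | (x, y) ∈ dynEntourage T U n}) := monotone_addContent_univ Λ hcover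
    _ ≤ ∑ y ∈ t, Λ {x ∈ F | (x, y) ∈ dynEntourage T U n} :=
        addContent_biUnion_le isSetRing_univ fun _ _ ↦ mem_univ _
    _ ≤ t.card • b := Finset.sum_le_card_nsmul _ _ _ fun y _ ↦ hball y
    _ = coverMincard T F U n * b := by rw [nsmul_eq_mul, ← hcard, ENat.toENNReal_coe]

theorem coverEntropy_iterate_le {X : Type*} [UniformSpace X] (T : X → X) (F : Set X) {N : ℕ}
    (hN : N ≠ 0) : coverEntropy T^[N] F ≤ N * coverEntropy T F := by
  refine iSup₂_le fun U hU ↦ ?_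
  have hle : ∀ n, coverMincard T^[N] F U n ≤ coverMincard T F U (N * n) := fun n ↦
    biInf_mono fun t ht ↦ ht.mono_entourage fun ⟨x, y⟩ hxy ↦ mem_dynEntourage.2 fun k hk ↦ by
      rw [← Function.iterate_mul]
      exact mem_dynEntourage.1 hxy _ (by gcongr)
  calc coverEntropyEntourage T^[N] F U
      ≤ expGrowthSup fun n ↦ (coverMincard T F U (N * n) : ℝ≥0∞) :=
        expGrowthSup_monotone fun n ↦ ENat.toENNReal_mono (hle n)
    _ = N * coverEntropyEntourage T F U := Monotone.expGrowthSup_comp_mul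
        (u := fun n ↦ (coverMincard T F U n : ℝ≥0∞))
        (fun _ _ hmn ↦ ENat.toENNReal_mono (coverMincard_monotone_time T F U hmn)) hN
    _ ≤ N * coverEntropy T F := by
        gcongr
        exact coverEntropyEntourage_le_coverEntropy T F hU

theorem log_le_of_forall_pow_le_mul_exp {s b : ℝ≥0∞} (hb : b ≠ ∞) {h : EReal}
    (hle : ∀ n : ℕ, n ≠ 0 → s ^ n ≤ b * EReal.exp (h * n)) : ENNReal.log s ≤ h := by
  rw [← expGrowthSup_pow, ← expGrowthSup_exp (a := h)]
  exact expGrowthSup_le_of_eventually_le hb ((eventually_ne_atTop 0).mono hle)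

variable {α : Type*} [LinearOrder α] {I D : Set α}

theorem exists_mem_uniformity_forall_ordConnected [UniformSpace α] [OrderTopology α]
    (hI : IsCompact I) (hD : D.Finite) : ∃ U ∈ uniformity α, ∀ y, ∃ K p, OrdConnected K ∧
      K ∩ D ⊆ {p} ∧ ∀ x ∈ I, (x, y) ∈ U → x ∈ K := by
  choose K hKmem hK hKD using exists_ordConnected_mem_nhds_inter_subset hD
  obtain ⟨V, hV, hball⟩ := lebesgue_number_lemma_nhds hI fun x _ ↦ hKmem x
  obtain ⟨U, hU, hUsymm, hUV⟩ := comp_symm_mem_uniformity_sets hV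
  refine ⟨U, hU, fun y ↦ ?_⟩
  by_cases hy : ∃ x₀ ∈ I, (x₀, y) ∈ U
  · obtain ⟨x₀, hx₀, hx₀y⟩ := hy
    obtain ⟨p, hp⟩ := hball x₀ hx₀
    exact ⟨K p, p, hK p, hKD p, fun x _ hxy ↦ hp (hUV ⟨y, hx₀y, hUsymm.symm _ _ hxy⟩)⟩
  · exact ⟨K y, y, hK y, hKD y, fun x hx hxy ↦ (hy ⟨x, hx, hxy⟩).elim⟩

namespace HasConstJacobian

variable {f : α → α} {Λ : AddContent ℝ≥0∞ (univ : Set (Set α))} {c : ℝ≥0∞}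

theorem le_pow_mul_image_iterate (h : HasConstJacobian f Λ c (𝒫 I)) (hc : c ≠ 0) (hc_top : c ≠ ∞)
    (hf : PiecewiseInjOn f I D) (hmaps : MapsTo f I I) (hI : I.OrdConnected) {A : Set α}
    (hA : A ⊆ I) {n : ℕ}
    (hsep : ∀ k < n, ∃ K p, OrdConnected K ∧ K ∩ D ⊆ {p} ∧ f^[k] '' A ⊆ K) :
    Λ A ≤ (3 * c⁻¹) ^ n * Λ (f^[n] '' A) := by
  induction n with
  | zero => simp
  | succ n ih =>
    obtain ⟨K, p, hK, hKD, hAK⟩ := hsep n n.lt_succ_self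
    calc Λ A ≤ (3 * c⁻¹) ^ n * Λ (f^[n] '' A) := ih fun k hk ↦ hsep k (hk.trans n.lt_succ_self)
      _ ≤ (3 * c⁻¹) ^ n * (3 * (c⁻¹ * Λ (f '' (f^[n] '' A)))) := by
          gcongr
          exact h.le_three_mul_image hc hc_top hf hI hK hKD
            ((image_mono hA).trans (hmaps.iterate n).image_subset) hAK
      _ = (3 * c⁻¹) ^ (n + 1) * Λ (f^[n + 1] '' A) := by
          rw [← image_comp, ← Function.iterate_succ', pow_succ, mul_assoc, mul_assoc]

theorem log_div_three_le_coverEntropy [UniformSpace α] [OrderTopology α]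
    (h : HasConstJacobian f Λ c (𝒫 I)) (hc : c ≠ 0) (hc_top : c ≠ ∞) (hf : PiecewiseInjOn f I D)
    (hmaps : MapsTo f I I) (hI : I.OrdConnected) (hcompact : IsCompact I) (hD : D.Finite)
    (hΛ : Λ I ≠ 0) (hΛ_top : Λ I ≠ ∞) : ENNReal.log (c / 3) ≤ coverEntropy f I := by
  obtain ⟨U, hU, hsep⟩ := exists_mem_uniformity_forall_ordConnected hcompact hD
  have hq : 3 * c⁻¹ ≠ 0 := mul_ne_zero (by norm_num) (ENNReal.inv_ne_zero.2 hc_top)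
  have hinv : (3 * c⁻¹)⁻¹ = c / 3 := by
    rw [ENNReal.mul_inv (.inl (by norm_num)) (.inl (by norm_num)), inv_inv, mul_comm,
      ← div_eq_mul_inv]
  have hball : ∀ n y, Λ {x ∈ I | (x, y) ∈ dynEntourage f U n} ≤ (3 * c⁻¹) ^ n * Λ I := by
    intro n y
    refine (h.le_pow_mul_image_iterate hc hc_top hf hmaps hI (sep_subset _ _) fun k hk ↦ ?_).trans
      (by gcongr; exact monotone_addContent_univ Λ ((image_mono (sep_subset _ _)).trans
        (hmaps.iterate n).image_subset))
    obtain ⟨K, p, hK, hKD, hmem⟩ := hsep (f^[k] y)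
    refine ⟨K, p, hK, hKD, ?_⟩
    rintro _ ⟨x, hx, rfl⟩
    exact hmem _ (hmaps.iterate k hx.1) (mem_dynEntourage.1 hx.2 k hk)
  have hcard : ∀ n, (c / 3) ^ n ≤ coverMincard f I U n := fun n ↦ by
    have hle := addContent_le_coverMincard_mul (mul_ne_zero (pow_ne_zero n hq) hΛ) (hball n)
    rw [← hinv, ← ENNReal.inv_pow, ← one_div, ← ENNReal.mul_div_mul_right 1 _ hΛ hΛ_top, one_mul]
    exact ENNReal.div_le_of_le_mul hle
  calc ENNReal.log (c / 3) = expGrowthSup fun n ↦ (c / 3) ^ n := expGrowthSup_pow.symm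
    _ ≤ coverEntropyEntourage f I U := expGrowthSup_monotone hcard
    _ ≤ coverEntropy f I := coverEntropyEntourage_le_coverEntropy f I hU

end HasConstJacobian

end LowerBound

section Equality

variable {α : Type*} [ConditionallyCompleteLinearOrder α] [DenselyOrdered α] [UniformSpace α]
  [OrderTopology α] {f : α → α} {I C : Set α} {Λ : AddContent ℝ≥0∞ (univ : Set (Set α))} {s : ℝ≥0∞}

theorem HasConstJacobian.log_le_coverEntropy (h : HasConstJacobian f Λ s (𝒫 I)) (hs : s ≠ 0)
    (hs_top : s ≠ ∞) (hC : PiecewiseInjOn f I C) (hf : ContinuousOn f I) (hmaps : MapsTo f I I)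
    (hI : I.OrdConnected) (hcompact : IsCompact I) (hfin : C.Finite) (hΛ : Λ I ≠ 0)
    (hΛ_top : Λ I ≠ ∞) : ENNReal.log s ≤ coverEntropy f I := by
  refine log_le_of_forall_pow_le_mul_exp (b := 3) (by norm_num) fun N hN ↦ ?_
  have hlog : ENNReal.log (s ^ N / 3) ≤ coverEntropy f I * N :=
    calc ENNReal.log (s ^ N / 3) ≤ coverEntropy f^[N] I :=
          (h.iterate_powerset hmaps N).log_div_three_le_coverEntropy (pow_ne_zero N hs)
            (ENNReal.pow_ne_top hs_top) (hC.iterate hf hmaps N) (hmaps.iterate N) hI hcompact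
            (hC.finite_visitSet hf hmaps hI hfin N) hΛ hΛ_top
      _ ≤ N * coverEntropy f I := coverEntropy_iterate_le f I hN
      _ = coverEntropy f I * N := mul_comm _ _
  rw [mul_comm, ← ENNReal.div_le_iff (by norm_num) (by norm_num), ← ENNReal.exp_log (s ^ N / 3)]
  exact EReal.exp_monotone hlog

theorem HasConstJacobian.coverEntropy_eq_log {ι : Type*} [Finite ι] {J : ι → Set α}
    (h : HasConstJacobian f Λ s (𝒫 I)) (hs : 1 < s) (hs_top : s ≠ ∞) (hC : PiecewiseInjOn f I C)
    (hfin : C.Finite) (hJ : ⋃ i, J i = I) (hdisj : Pairwise (Function.onFun Disjoint J))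
    (hinj : ∀ i, InjOn f (J i)) (hf : ContinuousOn f I) (hmaps : MapsTo f I I)
    (hI : I.OrdConnected) (hcompact : IsCompact I) (hΛ : Λ I ≠ 0) (hΛ_top : ∀ A, Λ A ≠ ∞)
    (hdiffuse : ∀ x, Tendsto Λ (𝓝 x).smallSets (𝓝 0))
    (hpos : ∀ x ∈ I, ∀ y ∈ I, x < y → 0 < Λ (Ioo x y)) :
    coverEntropy f I = ENNReal.log s := by
  refine le_antisymm ?_ (h.log_le_coverEntropy (zero_lt_one.trans hs).ne' hs_top hC hf hmaps hI
    hcompact hfin hΛ (hΛ_top I))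
  rw [← ENNReal.ofReal_toReal hs_top]
  exact coverEntropy_le_log_of_lipschitz hcompact hmaps
    (continuous_contentCDF hΛ_top hdiffuse).continuousOn (strictMonoOn_contentCDF hΛ_top hpos).injOn
    (by simpa using ENNReal.toReal_mono hs_top hs.le) fun x hx y hy ↦
      h.abs_contentCDF_sub_le hs_top hJ hdisj hinj hf hI hΛ_top hdiffuse hx hy

theorem ofReal_exp_htop {g : ℝ → ℝ} (hs : s ≠ 0) (hs_top : s ≠ ∞)
    (hg : coverEntropy g unitI = ENNReal.log s) : ENNReal.ofReal (Real.exp (htop g)) = s := by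
  rw [htop, hg, ENNReal.log_pos_real hs hs_top, EReal.toReal_coe,
    Real.exp_log (ENNReal.toReal_pos hs hs_top), ENNReal.ofReal_toReal hs_top]

end Equality

end CoverEntropy

/-! ### The measure with constant Jacobian -/

section ContentMeasure

theorem eq_Ioc_sInf_sSup_of_ordConnected {α β : Type*} [ConditionallyCompleteLinearOrder α]
    [PartialOrder β] {m : Set α → β} (hmono : Monotone m)
    (hinsert : ∀ x A, m (insert x A) ≤ m A) {K : Set α} (hK : K.OrdConnected) (hne : K.Nonempty)
    (hbelow : BddBelow K) (habove : BddAbove K) : m K = m (Ioc (sInf K) (sSup K)) := by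
  refine le_antisymm ((hmono fun x hx ↦ ?_).trans (hinsert (sInf K) _))
    ((hmono fun x hx ↦ ?_).trans (hinsert (sSup K) _))
  · exact (csInf_le hbelow hx).eq_or_lt.imp Eq.symm fun hlt ↦ ⟨hlt, le_csSup habove hx⟩
  · refine hx.2.eq_or_lt.imp_right fun hlt ↦ ?_
    obtain ⟨a, ha, hax⟩ := exists_lt_of_csInf_lt hne hx.1
    obtain ⟨b, hb, hxb⟩ := exists_lt_of_lt_csSup hne hlt
    exact hK.out ha hb ⟨hax.le, hxb.le⟩

theorem exists_measure_eq_addContent_of_ordConnected {Λ : AddContent ℝ≥0∞ (univ : Set (Set ℝ))}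
    (hΛ : ∀ A, Λ A ≠ ∞) (hdiffuse : ∀ x, Tendsto Λ (𝓝 x).smallSets (𝓝 0)) {I : Set ℝ}
    (hI : MeasurableSet I) (hbounded : Bornology.IsBounded I) :
    ∃ μ : Measure ℝ, μ Iᶜ = 0 ∧ (∀ x, μ {x} = 0) ∧ ∀ K ⊆ I, K.OrdConnected → μ K = Λ K := by
  have hcont := continuous_contentCDF hΛ hdiffuse
  let F : StieltjesFunction ℝ :=
    ⟨contentCDF Λ, monotone_contentCDF hΛ, fun _ ↦ hcont.continuousWithinAt⟩
  have hsingleton : ∀ x, F.measure {x} = 0 := fun x ↦ by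
    rw [F.measure_singleton, hcont.continuousAt.continuousWithinAt.leftLim_eq, sub_self,
      ENNReal.ofReal_zero]
  have hinsert : ∀ x A, F.measure (insert x A) ≤ F.measure A := fun x A ↦
    (measure_union_le {x} A).trans_eq (by rw [hsingleton, zero_add])
  have hinterval : ∀ K ⊆ I, K.OrdConnected → F.measure K = Λ K := by
    intro K hKI hK
    rcases K.eq_empty_or_nonempty with rfl | hne
    · rw [measure_empty, addContent_empty]
    have hbelow := (hbounded.subset hKI).bddBelow
    have habove := (hbounded.subset hKI).bddAbove
    rw [eq_Ioc_sInf_sSup_of_ordConnected (fun _ _ ↦ measure_mono) hinsert hK hne hbelow habove,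
      eq_Ioc_sInf_sSup_of_ordConnected (monotone_addContent_univ Λ)
        (fun x ↦ addContent_insert_le_of_tendsto_smallSets (hdiffuse x)) hK hne hbelow habove,
      F.measure_Ioc, contentCDF_sub_contentCDF hΛ (csInf_le_csSup hne hbelow habove),
      ENNReal.ofReal_toReal (hΛ _)]
  refine ⟨F.measure.restrict I, ?_, fun x ↦ ?_, fun K hKI hK ↦ ?_⟩
  · rw [Measure.restrict_apply' hI, compl_inter_self, measure_empty]
  · exact Measure.restrict_le_self.absolutelyContinuous (hsingleton x)
  · rw [Measure.restrict_eq_self _ hKI, hinterval K hKI hK]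

end ContentMeasure

section MeasureJacobian

variable {f : ℝ → ℝ} {c : ℝ≥0∞} {μ : Measure ℝ}

theorem ordConnected_inter_preimage_Iic {J : Set ℝ} (hJ : J.OrdConnected) (hf : ContinuousOn f J)
    (hinj : InjOn f J) (y : ℝ) : (J ∩ f ⁻¹' Iic y).OrdConnected := by
  refine ⟨fun u hu v hv w hw ↦ ?_⟩
  have hsub : Icc u v ⊆ J := hJ.out hu.1 hv.1
  have huv : u ≤ v := hw.1.trans hw.2
  refine ⟨hsub hw, ?_⟩
  rcases (hf.mono hsub).strictMonoOn_of_injOn_Icc' huv (hinj.mono hsub) with hmono | hanti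
  · exact (hmono.monotoneOn hw (right_mem_Icc.2 huv) hw.2).trans hv.2
  · exact (hanti.antitoneOn (left_mem_Icc.2 huv) hw hw.1).trans hu.2

namespace HasConstJacobian

section FiniteMeasure

variable [IsFiniteMeasure μ]

theorem restrict_image_eq_smul_map {J : Set ℝ}
    (h : HasConstJacobian f μ c {K | K ⊆ J ∧ K.OrdConnected}) (hJ : J.OrdConnected)
    (hf : ContinuousOn f J) (hinj : InjOn f J) :
    μ.restrict (f '' J) = c • (μ.restrict J).map f := by
  refine Measure.ext_of_Iic _ _ fun y ↦ ?_
  rw [Measure.restrict_apply measurableSet_Iic, Measure.smul_apply, smul_eq_mul,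
    Measure.map_apply_of_aemeasurable (hf.aemeasurable hJ.measurableSet) measurableSet_Iic,
    Measure.restrict_apply' hJ.measurableSet, inter_comm (Iic y), inter_comm _ J,
    ← image_inter_preimage,
    h _ ⟨inter_subset_left, ordConnected_inter_preimage_Iic hJ hf hinj y⟩
      (hinj.mono inter_subset_left)]

theorem measure_image_of_subset {J : Set ℝ}
    (h : HasConstJacobian f μ c {K | K ⊆ J ∧ K.OrdConnected}) (hJ : J.OrdConnected)
    (hf : ContinuousOn f J) (hinj : InjOn f J) {A : Set ℝ} (hA : MeasurableSet A) (hAJ : A ⊆ J) :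
    μ (f '' A) = c * μ A := by
  have himage : MeasurableSet (f '' A) :=
    hA.image_of_continuousOn_injOn (hf.mono hAJ) (hinj.mono hAJ)
  calc μ (f '' A) = μ.restrict (f '' J) (f '' A) :=
        (Measure.restrict_eq_self μ (image_mono hAJ)).symm
    _ = c * μ (f ⁻¹' (f '' A) ∩ J) := by
        rw [h.restrict_image_eq_smul_map hJ hf hinj, Measure.smul_apply, smul_eq_mul,
          Measure.map_apply_of_aemeasurable (hf.aemeasurable hJ.measurableSet) himage,
          Measure.restrict_apply' hJ.measurableSet]
    _ = c * μ A := by rw [hinj.preimage_image_inter hAJ]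

theorem of_ordConnected {ι : Type*} [Countable ι] {I : Set ℝ} {J : ι → Set ℝ}
    (h : HasConstJacobian f μ c {K | K ⊆ I ∧ K.OrdConnected}) (hf : ContinuousOn f I)
    (hJ : ∀ i, (J i).OrdConnected) (hJI : ⋃ i, J i = I)
    (hdisj : Pairwise (Function.onFun Disjoint J)) (hinj : ∀ i, InjOn f (J i)) :
    HasConstJacobian f μ c {A | MeasurableSet A ∧ A ⊆ I} := by
  rintro A ⟨hA, hAI⟩ hinjA
  have hpart : ∀ i, J i ⊆ I := fun i ↦ hJI ▸ subset_iUnion J i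
  have hcover : A = ⋃ i, A ∩ J i := by rw [← inter_iUnion, hJI, inter_eq_left.2 hAI]
  have hmeas : ∀ i, MeasurableSet (A ∩ J i) := fun i ↦ hA.inter (hJ i).measurableSet
  have hdisjA : Pairwise (Function.onFun Disjoint fun i ↦ A ∩ J i) := fun i j hij ↦
    (hdisj hij).mono inter_subset_right inter_subset_right
  have hdisj_image : Pairwise (Function.onFun Disjoint fun i ↦ f '' (A ∩ J i)) := fun i j hij ↦
    (hdisjA hij).image hinjA inter_subset_left inter_subset_left
  calc μ (f '' A) = μ (⋃ i, f '' (A ∩ J i)) := by rw [← image_iUnion, ← hcover]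
    _ = ∑' i, μ (f '' (A ∩ J i)) := measure_iUnion hdisj_image fun i ↦
        (hmeas i).image_of_continuousOn_injOn (hf.mono (inter_subset_left.trans hAI))
          (hinjA.mono inter_subset_left)
    _ = ∑' i, c * μ (A ∩ J i) := tsum_congr fun i ↦
        measure_image_of_subset (fun K hK ↦ h K ⟨hK.1.trans (hpart i), hK.2⟩) (hJ i)
          (hf.mono (hpart i)) (hinj i) (hmeas i) inter_subset_right
    _ = c * μ A := by rw [ENNReal.tsum_mul_left, ← measure_iUnion hdisjA hmeas, ← hcover]

end FiniteMeasure

theorem of_addContent {Λ : AddContent ℝ≥0∞ (univ : Set (Set ℝ))} {I : Set ℝ}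
    (h : HasConstJacobian f Λ c (𝒫 I)) (hf : ContinuousOn f I) (hmaps : MapsTo f I I)
    (hμ : ∀ K ⊆ I, K.OrdConnected → μ K = Λ K) :
    HasConstJacobian f μ c {K | K ⊆ I ∧ K.OrdConnected} := by
  rintro K ⟨hKI, hK⟩ hinj
  have himage : (f '' K).OrdConnected :=
    (hK.isPreconnected.image f (hf.mono hKI)).ordConnected
  rw [hμ _ ((image_mono hKI).trans hmaps.image_subset) himage, hμ K hKI hK, h K hKI hinj]

end HasConstJacobian

theorem ballI_pos_of_Ioo_pos (hpos : ∀ a b, 0 ≤ a → a < b → b ≤ 1 → 0 < μ (Ioo a b)) {x r : ℝ}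
    (hx : x ∈ unitI) (hr : 0 < r) : 0 < μ (ballI x r) := by
  have hlt : max 0 (x - r) < min 1 (x + r) := by
    refine max_lt (lt_min zero_lt_one ?_) (lt_min ?_ ?_) <;> linarith [hx.1, hx.2]
  refine (hpos _ _ (le_max_left _ _) hlt (min_le_left _ _)).trans_le (measure_mono fun y hy ↦ ?_)
  obtain ⟨hy0, hyl⟩ := max_lt_iff.1 hy.1
  obtain ⟨hy1, hyr⟩ := lt_min_iff.1 hy.2
  exact ⟨⟨hy0.le, hy1.le⟩, abs_sub_lt_iff.2 ⟨by linarith, by linarith⟩⟩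

end MeasureJacobian

theorem Multimodal.exists_finite_piecewiseInjOn {f : ℝ → ℝ} (hmm : Multimodal f) :
    ∃ C : Set ℝ, C.Finite ∧ PiecewiseInjOn f unitI C := by
  obtain ⟨-, -, -, n, J, hJ, hJI, -, hinj⟩ := hmm
  have hpart : ∀ i, J i ⊆ Icc 0 1 := fun i ↦ (subset_iUnion J i).trans hJI.subset
  exact ⟨_, (finite_range _).union (finite_range _), piecewiseInjOn_endpoints hJI.ge hJ
    (fun i ↦ bddBelow_Icc.mono (hpart i)) (fun i ↦ bddAbove_Icc.mono (hpart i)) hinj⟩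

theorem Multimodal.exists_addContent_hasConstJacobian {f : ℝ → ℝ} (hmm : Multimodal f)
    (hex : TopExact f) :
    ∃ Λ : AddContent ℝ≥0∞ (univ : Set (Set ℝ)), Λ unitI = 1 ∧ (∀ A, Λ A ≠ ∞) ∧
      (∀ x, Tendsto Λ (𝓝 x).smallSets (𝓝 0)) ∧
      (∀ a b, 0 ≤ a → a < b → b ≤ 1 → 0 < Λ (Ioo a b)) ∧
      HasConstJacobian f Λ (ENNReal.ofReal (Real.exp (htop f))) (𝒫 unitI) := by
  obtain ⟨C, hfin, hC⟩ := hmm.exists_finite_piecewiseInjOn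
  obtain ⟨hf, hmaps, -, n, J, -, hJI, hdisj, hinj⟩ := hmm
  obtain ⟨s, hs⟩ := exists_isGrowthRate (e := lapBound f unitI C)
    (fun _ ↦ Nat.succ_pos _) (hC.lapBound_add_le hf hmaps ordConnected_Icc hfin)
  have hs_one : 1 < s := hex.one_lt_growthRate hC hf hmaps hfin hs
  have hs_top : s ≠ ∞ := hs.ne_top (ENNReal.natCast_ne_top _)
  obtain ⟨Λ, hΛI, hΛc, hΛ⟩ :=
    hC.exists_addContent_hasConstJacobian hf hmaps ordConnected_Icc hfin hs hs_one
  have hΛ0 : Λ unitI ≠ 0 := hΛI ▸ one_ne_zero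
  have hΛ_top : ∀ A, Λ A ≠ ∞ := fun A ↦
    ((addContent_le_of_compl_eq_zero hΛc A).trans_lt (hΛI ▸ ENNReal.one_lt_top)).ne
  have hdiffuse := hC.tendsto_addContent_smallSets hf hmaps ordConnected_Icc hfin hs_one hs_top
    (hΛ_top _) hΛc hΛ
  have hpos : ∀ a b, 0 ≤ a → a < b → b ≤ 1 → 0 < Λ (Ioo a b) := fun a b ↦
    hex.addContent_Ioo_pos hmaps hΛ0 hΛ hJI hdisj hinj
  have hentropy : Dynamics.coverEntropy f unitI = ENNReal.log s :=
    hΛ.coverEntropy_eq_log hs_one hs_top hC hfin hJI hdisj hinj hf hmaps ordConnected_Icc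
      isCompact_Icc hΛ0 hΛ_top hdiffuse fun x hx y hy hxy ↦ hpos x y hx.1 hxy hy.2
  exact ⟨Λ, hΛI, hΛ_top, hdiffuse, hpos,
    (ofReal_exp_htop (zero_lt_one.trans hs_one).ne' hs_top hentropy).symm ▸ hΛ⟩

/-- **Lemma 2.5** (Parry, Milnor-Thurston, Hofbauer): a topologically exact multimodal
map has a non-atomic Borel probability measure with full support on the unit interval
and constant Jacobian `exp (htop f)`. -/
theorem exists_max_entropy_measure (f : ℝ → ℝ)
    (hmm : Multimodal f) (hex : TopExact f) :
    ∃ μ : Measure ℝ, IsProbabilityMeasure μ ∧ μ unitIᶜ = 0 ∧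
      (∀ x : ℝ, μ {x} = 0) ∧
      (∀ x ∈ unitI, ∀ r : ℝ, 0 < r → 0 < μ (ballI x r)) ∧
      ∀ A : Set ℝ, MeasurableSet A → A ⊆ unitI → Set.InjOn f A →
        μ (f '' A) = ENNReal.ofReal (Real.exp (htop f)) * μ A := by
  obtain ⟨Λ, hΛI, hΛ_top, hdiffuse, hpos, hΛ⟩ := hmm.exists_addContent_hasConstJacobian hex
  obtain ⟨μ, hμc, hμ_singleton, hμ⟩ := exists_measure_eq_addContent_of_ordConnected hΛ_top hdiffuse
    (I := unitI) measurableSet_Icc (isBounded_Icc 0 1)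
  have hprob : IsProbabilityMeasure μ := ⟨by
    rw [← measure_of_measure_compl_eq_zero hμc, hμ unitI subset_rfl ordConnected_Icc, hΛI]⟩
  have hμ_pos : ∀ a b, 0 ≤ a → a < b → b ≤ 1 → 0 < μ (Ioo a b) := fun a b ha hab hb ↦ by
    rw [hμ _ (Ioo_subset_Icc_self.trans (Icc_subset_Icc ha hb)) ordConnected_Ioo]
    exact hpos a b ha hab hb
  obtain ⟨hf, hmaps, -, n, J, hJ, hJI, hdisj, hinj⟩ := hmm
  have hjacobian := (hΛ.of_addContent hf hmaps hμ).of_ordConnected hf hJ hJI hdisj hinj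
  exact ⟨μ, hprob, hμc, hμ_singleton, fun x hx r hr ↦ ballI_pos_of_Ioo_pos hμ_pos hx hr,
    fun A hA hAI hinjA ↦ hjacobian A ⟨hA, hAI⟩ hinjA⟩

end
end
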